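/- There exists a universal constant c > 0 with the following property. Let ρ ∈ (0,1), let n be a positive integer, and let A, B ⊂ ℝⁿ be measurable sets with 0 < λ(A) < ∞, 0 < λ(B) < ∞ and ρ ≤ (λ(B)/λ(A))^{1/n} ≤ ρ⁻¹. Let Θ ⊂ A × B be a measurable set with λ(Θ) ≥ (1 − c·min{ρ√n, 1})·λ(A)·λ(B). Then λ(A +_Θ B)^{2/n} ≥ λ(A)^{2/n} + λ(B)^{2/n}. -/

import Mathlib

open MeasureTheory

/-- The restricted (to `Θ`) Minkowski sum `A +_Θ B = { x + y : (x, y) ∈ Θ }`. -/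
def restrictedSum {n : ℕ} (Θ : Set (EuclideanSpace ℝ (Fin n) × EuclideanSpace ℝ (Fin n))) :
    Set (EuclideanSpace ℝ (Fin n)) :=
  (fun p => p.1 + p.2) '' Θ

/-!
Transport the uniform laws on `A` and `B` to the standard Gaussian, one coordinate at a time and
monotonically in each (a Knothe map), and call the two maps `P` and `Q`. For `p + q = 1` put
`L (x, y) = √(p * q) * ⟪P x, Q y⟫`. The change of variables `√q * P x - √p * Q (z - x)` and the
weighted AM-GM inequality bound `∫ exp (L (x, z - x))` over `x` uniformly in `z`, so `∫_Θ exp L` is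
at most a constant times the measure of `A +_Θ B`. On the other hand `P x` and `Q y` are independent
Gaussian vectors, so the exponential moments of `L` over `A × B` are explicit and exceed its measure
by a definite amount, which a small complement of `Θ` cannot absorb. If `a ^ n`, `b ^ n` are the
measures of `A`, `B`, optimising `p` yields the claim as soon as `r = √n * b / a` is bounded below
(taking `b ≤ a`).

If `r` is small and the claim fails, then `A +_Θ B` has measure at most `(1 + r ^ 2) * a ^ n`, so
`A` is nearly invariant under the differences of a set `C ⊆ B` of at least half the measure of `B`.
Iterating about `1 / r` times, `A` is nearly invariant under a dilate `V` of `C` for which the first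
case applies to the pairs `(x, v)` in `A × V` with `x + v ∈ A`. Their sumset lies inside `A`, which
contradicts the bound.
-/

section

open Set Filter Topology ProbabilityTheory
open scoped ENNReal NNReal

lemma lt_of_monotone_of_hasDerivAt_left {F : ℝ → ℝ} (hF : Monotone F) {x y F' : ℝ}
    (h : HasDerivAt F F' x) (hF' : F' ≠ 0) (hxy : x < y) : F x < F y := by
  have hne : ∀ᶠ z in 𝓝[>] x, F z ≠ F x :=
    (h.eventually_ne hF').filter_mono (nhdsGT_le_nhdsNE x)
  obtain ⟨z, hz, hxz⟩ := (hne.and (Ioo_mem_nhdsGT hxy)).exists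
  exact ((hF hxz.1.le).lt_of_ne' hz).trans_le (hF hxz.2.le)

lemma lt_of_monotone_of_hasDerivAt_right {F : ℝ → ℝ} (hF : Monotone F) {x y F' : ℝ}
    (h : HasDerivAt F F' y) (hF' : F' ≠ 0) (hxy : x < y) : F x < F y := by
  have hne : ∀ᶠ z in 𝓝[<] y, F z ≠ F y :=
    (h.eventually_ne hF').filter_mono (nhdsLT_le_nhdsNE y)
  obtain ⟨z, hz, hzy⟩ := (hne.and (Ioo_mem_nhdsLT hxy)).exists
  exact (hF hzy.1.le).trans_lt ((hF hzy.2.le).lt_of_ne hz)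

section

variable {E : Type*} [NormedAddCommGroup E] [NormedSpace ℝ E] {f : ℝ → E}

lemma setIntegral_Iic_eq_add_intervalIntegral (hf : Integrable f) (a t : ℝ) :
    ∫ x in Iic t, f x = (∫ x in Iic a, f x) + ∫ x in a..t, f x := by
  rw [← intervalIntegral.integral_Iic_sub_Iic hf.integrableOn hf.integrableOn, add_sub_cancel]

variable [CompleteSpace E]

lemma hasDerivAt_setIntegral_Iic (hf : Integrable f) {t : ℝ}
    (hmeas : StronglyMeasurableAtFilter f (𝓝 t)) (ht : ContinuousAt f t) :
    HasDerivAt (fun t ↦ ∫ x in Iic t, f x) (f t) t := by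
  rw [funext (setIntegral_Iic_eq_add_intervalIntegral hf 0)]
  exact (intervalIntegral.integral_hasDerivAt_right hf.intervalIntegrable hmeas ht).const_add _

lemma ae_hasDerivAt_setIntegral_Iic (hf : Integrable f) :
    ∀ᵐ t, HasDerivAt (fun t ↦ ∫ x in Iic t, f x) (f t) t := by
  rw [funext (setIntegral_Iic_eq_add_intervalIntegral hf 0)]
  filter_upwards [LocallyIntegrable.ae_hasDerivAt_integral hf.locallyIntegrable] with t ht
  exact (ht 0).const_add _

end

lemma range_cdf_eq_Ioo {μ : Measure ℝ} (hmono : StrictMono (cdf μ)) (hcont : Continuous (cdf μ)) :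
    range (cdf μ) = Ioo 0 1 := by
  refine Subset.antisymm ?_ fun u hu ↦ ?_
  · rintro _ ⟨t, rfl⟩
    exact ⟨(cdf_nonneg μ _).trans_lt (hmono (sub_one_lt t)),
      (hmono (lt_add_one t)).trans_le (cdf_le_one μ _)⟩
  · obtain ⟨a, ha⟩ := ((tendsto_cdf_atBot μ).eventually (gt_mem_nhds hu.1)).exists
    obtain ⟨b, hb⟩ := ((tendsto_cdf_atTop μ).eventually (lt_mem_nhds hu.2)).exists
    exact mem_range_of_exists_le_of_exists_ge hcont ⟨a, ha.le⟩ ⟨b, hb.le⟩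

section GaussianReal

variable (m : ℝ) {v : ℝ≥0}

lemma hasDerivAt_cdf_gaussianReal (hv : v ≠ 0) (t : ℝ) :
    HasDerivAt (cdf (gaussianReal m v)) (gaussianPDFReal m v t) t := by
  have hcdf : cdf (gaussianReal m v) = fun t ↦ ∫ x in Iic t, gaussianPDFReal m v x := by
    ext t
    rw [cdf_eq_real, measureReal_def, gaussianReal_apply_eq_integral m hv,
      ENNReal.toReal_ofReal (integral_nonneg (gaussianPDFReal_nonneg m v))]
  have hcont : Continuous (gaussianPDFReal m v) := by
    rw [gaussianPDFReal_def]
    fun_prop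
  rw [hcdf]
  exact hasDerivAt_setIntegral_Iic (integrable_gaussianPDFReal m v)
    hcont.stronglyMeasurable.stronglyMeasurableAtFilter hcont.continuousAt

lemma strictMono_cdf_gaussianReal (hv : v ≠ 0) : StrictMono (cdf (gaussianReal m v)) :=
  strictMono_of_hasDerivAt_pos (hasDerivAt_cdf_gaussianReal m hv)
    fun t ↦ gaussianPDFReal_pos m v t hv

lemma range_cdf_gaussianReal (hv : v ≠ 0) : range (cdf (gaussianReal m v)) = Ioo 0 1 :=
  range_cdf_eq_Ioo (strictMono_cdf_gaussianReal m hv)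
    (continuous_iff_continuousAt.2 fun t ↦ (hasDerivAt_cdf_gaussianReal m hv t).continuousAt)

lemma lintegral_exp_mul_gaussianReal (v : ℝ≥0) (t : ℝ) :
    ∫⁻ x, ENNReal.ofReal (Real.exp (t * x)) ∂gaussianReal m v
      = ENNReal.ofReal (Real.exp (m * t + v * t ^ 2 / 2)) := by
  rw [← ofReal_integral_eq_lintegral_ofReal (integrable_exp_mul_gaussianReal t)
    (ae_of_all _ fun x ↦ (Real.exp_pos _).le)]
  exact congrArg ENNReal.ofReal (congrFun mgf_id_gaussianReal t)

end GaussianReal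

lemma lintegral_exp_mul_sq_gaussianReal {c : ℝ} (hc : c < 1) :
    ∫⁻ x, ENNReal.ofReal (Real.exp (c * x ^ 2 / 2)) ∂gaussianReal 0 1
      = ENNReal.ofReal (√(1 - c))⁻¹ := by
  have hb : 0 < (1 - c) / 2 := by linarith
  have hdens : ∀ x : ℝ, gaussianPDF 0 1 x * ENNReal.ofReal (Real.exp (c * x ^ 2 / 2))
      = ENNReal.ofReal ((√(2 * Real.pi))⁻¹ * Real.exp (-((1 - c) / 2) * x ^ 2)) := by
    intro x
    rw [gaussianPDF, ← ENNReal.ofReal_mul (gaussianPDFReal_nonneg _ _ _), gaussianPDFReal,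
      mul_assoc, ← Real.exp_add]
    simp only [NNReal.coe_one, mul_one, sub_zero]
    ring_nf
  rw [gaussianReal_of_var_ne_zero _ one_ne_zero,
    lintegral_withDensity_eq_lintegral_mul _ (measurable_gaussianPDF 0 1) (by fun_prop)]
  simp only [Pi.mul_apply, hdens]
  rw [← ofReal_integral_eq_lintegral_ofReal ((integrable_exp_neg_mul_sq hb).const_mul _)
    (ae_of_all _ fun x ↦ by positivity), integral_const_mul, integral_gaussian, ← Real.sqrt_inv,
    ← Real.sqrt_mul (by positivity), ← Real.sqrt_inv]
  congr 2
  field_simp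

lemma lintegral_lintegral_exp_mul_gaussianReal {t : ℝ} (ht : t ^ 2 < 1) :
    ∫⁻ x, ∫⁻ y, ENNReal.ofReal (Real.exp (t * (x * y))) ∂gaussianReal 0 1 ∂gaussianReal 0 1
      = ENNReal.ofReal (√(1 - t ^ 2))⁻¹ := by
  simp_rw [← mul_assoc, lintegral_exp_mul_gaussianReal, zero_mul, zero_add, NNReal.coe_one,
    one_mul, mul_pow]
  exact lintegral_exp_mul_sq_gaussianReal ht

/-! ### Monotone transport to the Gaussian -/

/-- The quantile function of the standard Gaussian measure, meaningful on `Ioo 0 1` only. -/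
noncomputable def gaussianQuantile : ℝ → ℝ := Function.invFun (cdf (gaussianReal 0 1))

lemma gaussianQuantile_cdf (t : ℝ) : gaussianQuantile (cdf (gaussianReal 0 1) t) = t :=
  Function.leftInverse_invFun (strictMono_cdf_gaussianReal 0 one_ne_zero).injective t

lemma cdf_gaussianQuantile {u : ℝ} (hu : u ∈ Ioo 0 1) :
    cdf (gaussianReal 0 1) (gaussianQuantile u) = u :=
  Function.invFun_eq (by rwa [← range_cdf_gaussianReal 0 one_ne_zero] at hu)

lemma strictMonoOn_gaussianQuantile : StrictMonoOn gaussianQuantile (Ioo 0 1) := by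
  intro u hu v hv huv
  rwa [← (strictMono_cdf_gaussianReal 0 one_ne_zero).lt_iff_lt, cdf_gaussianQuantile hu,
    cdf_gaussianQuantile hv]

lemma image_gaussianQuantile : gaussianQuantile '' Ioo 0 1 = univ := by
  rw [← range_cdf_gaussianReal 0 one_ne_zero, ← range_comp]
  exact eq_univ_of_forall fun t ↦ ⟨t, gaussianQuantile_cdf t⟩

lemma measurable_gaussianQuantile : Measurable gaussianQuantile := by
  refine measurable_of_restrict_of_restrict_compl (measurableSet_Ioo (a := (0 : ℝ)) (b := 1)) ?_ ?_
  · exact Monotone.measurable fun u v huv ↦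
      strictMonoOn_gaussianQuantile.monotoneOn u.2 v.2 huv
  · have hconst : ∀ u v : ((Ioo (0 : ℝ) 1)ᶜ : Set ℝ),
        gaussianQuantile u = gaussianQuantile v := by
      have hjunk : ∀ u : ((Ioo (0 : ℝ) 1)ᶜ : Set ℝ), ¬∃ t, cdf (gaussianReal 0 1) t = u :=
        fun u h ↦ u.2 ((range_cdf_gaussianReal 0 one_ne_zero).subset h)
      intro u v
      exact (Function.invFun_neg (hjunk u)).trans (Function.invFun_neg (hjunk v)).symm
    exact measurable_const' hconst

lemma hasDerivAt_gaussianQuantile {u : ℝ} (hu : u ∈ Ioo 0 1) :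
    HasDerivAt gaussianQuantile (gaussianPDFReal 0 1 (gaussianQuantile u))⁻¹ u := by
  have hnhds : Ioo (0 : ℝ) 1 ∈ 𝓝 u := isOpen_Ioo.mem_nhds hu
  refine HasDerivAt.of_local_left_inverse ?_ (hasDerivAt_cdf_gaussianReal 0 one_ne_zero _)
    (gaussianPDFReal_pos 0 1 _ one_ne_zero).ne' ?_
  · exact strictMonoOn_gaussianQuantile.continuousAt_of_image_mem_nhds hnhds
      (image_gaussianQuantile ▸ univ_mem)
  · filter_upwards [hnhds] with v hv using cdf_gaussianQuantile hv

lemma setLIntegral_eq_lintegral_of_ae_compl_eq_zero {α : Type*} [MeasurableSpace α]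
    {μ : Measure α} {s : Set α} (hs : MeasurableSet s) {f : α → ℝ≥0∞}
    (h : ∀ᵐ x ∂μ, x ∉ s → f x = 0) : ∫⁻ x in s, f x ∂μ = ∫⁻ x, f x ∂μ := by
  rw [← lintegral_indicator hs]
  exact lintegral_congr_ae (h.mono fun x hx ↦ indicator_apply_eq_self.2 hx)

section Transport

variable {f : ℝ → ℝ≥0∞}

/-- The distribution function of the probability measure proportional to the density `f`; it
vanishes if the total mass of `f` is `0` or `∞`. -/
noncomputable def normalizedCDF (f : ℝ → ℝ≥0∞) (x : ℝ) : ℝ :=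
  ((∫⁻ t in Iic x, f t) / ∫⁻ t, f t).toReal

/-- The increasing map which transports the density `f`, up to its total mass, to the standard
Gaussian measure. -/
noncomputable def gaussianTransport (f : ℝ → ℝ≥0∞) (x : ℝ) : ℝ :=
  gaussianQuantile (normalizedCDF f x)

/-- The points at which the derivative of `normalizedCDF f` is positive and is the normalized
density. -/
def transportRegularSet (f : ℝ → ℝ≥0∞) : Set ℝ :=
  {x | 0 < deriv (normalizedCDF f) x ∧
    f x = (∫⁻ t, f t) * ENNReal.ofReal (deriv (normalizedCDF f) x)}

lemma setLIntegral_Iic_div_le_one (f : ℝ → ℝ≥0∞) (x : ℝ) :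
    (∫⁻ t in Iic x, f t) / ∫⁻ t, f t ≤ 1 :=
  (ENNReal.div_le_div_right (setLIntegral_le_lintegral _ _) _).trans ENNReal.div_self_le_one

lemma monotone_normalizedCDF (f : ℝ → ℝ≥0∞) : Monotone (normalizedCDF f) := fun _ y hxy ↦
  ENNReal.toReal_mono ((setLIntegral_Iic_div_le_one f y).trans_lt ENNReal.one_lt_top).ne
    (ENNReal.div_le_div_right (lintegral_mono_set (Iic_subset_Iic.2 hxy)) _)

lemma normalizedCDF_le_one (f : ℝ → ℝ≥0∞) (x : ℝ) : normalizedCDF f x ≤ 1 :=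
  ENNReal.toReal_mono ENNReal.one_ne_top (setLIntegral_Iic_div_le_one f x)

lemma normalizedCDF_eq_integral (hf : Measurable f) (h0 : ∫⁻ t, f t ≠ 0)
    (htop : ∫⁻ t, f t ≠ ∞) (x : ℝ) :
    normalizedCDF f x = ∫ t in Iic x, (f t / ∫⁻ s, f s).toReal := by
  rw [integral_toReal (hf.div_const _).aemeasurable]
  · simp only [normalizedCDF, div_eq_mul_inv, lintegral_mul_const _ hf]
  · filter_upwards [ae_restrict_of_ae (ae_lt_top hf htop)] with t ht
      using ENNReal.div_lt_top ht.ne h0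

lemma ae_hasDerivAt_normalizedCDF (hf : Measurable f) (h0 : ∫⁻ t, f t ≠ 0)
    (htop : ∫⁻ t, f t ≠ ∞) :
    ∀ᵐ x, HasDerivAt (normalizedCDF f) (f x / ∫⁻ t, f t).toReal x := by
  rw [funext (normalizedCDF_eq_integral hf h0 htop)]
  refine ae_hasDerivAt_setIntegral_Iic (integrable_toReal_of_lintegral_ne_top
    (hf.div_const _).aemeasurable ?_)
  simp only [div_eq_mul_inv]
  rw [lintegral_mul_const _ hf, ENNReal.mul_inv_cancel h0 htop]
  exact ENNReal.one_ne_top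

lemma ae_eq_zero_of_notMem_transportRegularSet (hf : Measurable f) (htop : ∫⁻ t, f t ≠ ∞) :
    ∀ᵐ x, x ∉ transportRegularSet f → f x = 0 := by
  rcases eq_or_ne (∫⁻ t, f t) 0 with h0 | h0
  · filter_upwards [(lintegral_eq_zero_iff hf).1 h0] with x hx _ using hx
  filter_upwards [ae_hasDerivAt_normalizedCDF hf h0 htop, ae_lt_top hf htop] with x hx hfin hxs
  by_contra hne
  have hdiv : f x / ∫⁻ t, f t ≠ ∞ := (ENNReal.div_lt_top hfin.ne h0).ne
  refine hxs ⟨?_, ?_⟩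
  · rw [hx.deriv]
    exact ENNReal.toReal_pos (ENNReal.div_pos hne htop).ne' hdiv
  · rw [hx.deriv, ENNReal.ofReal_toReal hdiv, ENNReal.mul_div_cancel h0 htop]

lemma measurableSet_transportRegularSet (hf : Measurable f) :
    MeasurableSet (transportRegularSet f) :=
  (measurableSet_lt measurable_const (measurable_deriv (normalizedCDF f))).inter
    (measurableSet_eq_fun hf
      ((measurable_deriv (normalizedCDF f)).ennreal_ofReal.const_mul (∫⁻ t, f t)))

lemma hasDerivAt_normalizedCDF {x : ℝ} (hx : x ∈ transportRegularSet f) :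
    HasDerivAt (normalizedCDF f) (deriv (normalizedCDF f) x) x :=
  (differentiableAt_of_deriv_ne_zero hx.1.ne').hasDerivAt

lemma normalizedCDF_mem_Ioo {x : ℝ} (hx : x ∈ transportRegularSet f) :
    normalizedCDF f x ∈ Ioo 0 1 where
  left := ENNReal.toReal_nonneg.trans_lt <| lt_of_monotone_of_hasDerivAt_right
    (monotone_normalizedCDF f) (hasDerivAt_normalizedCDF hx) hx.1.ne' (sub_one_lt x)
  right := (lt_of_monotone_of_hasDerivAt_left (monotone_normalizedCDF f)
    (hasDerivAt_normalizedCDF hx) hx.1.ne' (lt_add_one x)).trans_le (normalizedCDF_le_one f _)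

lemma strictMonoOn_gaussianTransport (f : ℝ → ℝ≥0∞) :
    StrictMonoOn (gaussianTransport f) (transportRegularSet f) := fun _ hx _ hy hxy ↦
  strictMonoOn_gaussianQuantile (normalizedCDF_mem_Ioo hx) (normalizedCDF_mem_Ioo hy)
    (lt_of_monotone_of_hasDerivAt_left (monotone_normalizedCDF f) (hasDerivAt_normalizedCDF hx)
      hx.1.ne' hxy)

lemma hasDerivAt_gaussianTransport_inv_mul {x : ℝ} (hx : x ∈ transportRegularSet f) :
    HasDerivAt (gaussianTransport f)
      ((gaussianPDFReal 0 1 (gaussianTransport f x))⁻¹ * deriv (normalizedCDF f) x) x :=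
  (hasDerivAt_gaussianQuantile (normalizedCDF_mem_Ioo hx)).comp x (hasDerivAt_normalizedCDF hx)

lemma hasDerivAt_gaussianTransport {x : ℝ} (hx : x ∈ transportRegularSet f) :
    HasDerivAt (gaussianTransport f) (deriv (gaussianTransport f) x) x :=
  (hasDerivAt_gaussianTransport_inv_mul hx).differentiableAt.hasDerivAt

lemma deriv_gaussianTransport_pos {x : ℝ} (hx : x ∈ transportRegularSet f) :
    0 < deriv (gaussianTransport f) x := by
  rw [(hasDerivAt_gaussianTransport_inv_mul hx).deriv]
  exact mul_pos (inv_pos.2 (gaussianPDFReal_pos 0 1 _ one_ne_zero)) hx.1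

lemma gaussianTransport_monge_ampere {x : ℝ} (hx : x ∈ transportRegularSet f) :
    f x = (∫⁻ t, f t) * ENNReal.ofReal
      (gaussianPDFReal 0 1 (gaussianTransport f x) * deriv (gaussianTransport f) x) := by
  rw [(hasDerivAt_gaussianTransport_inv_mul hx).deriv,
    mul_inv_cancel_left₀ (gaussianPDFReal_pos 0 1 _ one_ne_zero).ne']
  exact hx.2

lemma measurableSet_image_gaussianTransport (hf : Measurable f) :
    MeasurableSet (gaussianTransport f '' transportRegularSet f) :=
  measurable_image_of_fderivWithin (measurableSet_transportRegularSet hf)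
    (fun _ hx ↦ (hasDerivAt_gaussianTransport hx).hasDerivWithinAt.hasFDerivWithinAt)
    (strictMonoOn_gaussianTransport f).injOn

lemma lintegral_mul_comp_gaussianTransport_eq_setLIntegral (hf : Measurable f)
    (htop : ∫⁻ t, f t ≠ ∞) {k : ℝ → ℝ≥0∞} (hk : Measurable k) :
    ∫⁻ x, f x * k (gaussianTransport f x) = (∫⁻ t, f t) *
      ∫⁻ u in gaussianTransport f '' transportRegularSet f, k u ∂gaussianReal 0 1 := by
  have hs := measurableSet_transportRegularSet hf
  calc ∫⁻ x, f x * k (gaussianTransport f x)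
      = ∫⁻ x in transportRegularSet f, f x * k (gaussianTransport f x) := by
        refine (setLIntegral_eq_lintegral_of_ae_compl_eq_zero hs ?_).symm
        filter_upwards [ae_eq_zero_of_notMem_transportRegularSet hf htop] with x hx hxs
        rw [hx hxs, zero_mul]
    _ = ∫⁻ x in transportRegularSet f, ENNReal.ofReal (deriv (gaussianTransport f) x) *
          ((∫⁻ t, f t) *
            (gaussianPDF 0 1 (gaussianTransport f x) * k (gaussianTransport f x))) := by
        refine setLIntegral_congr_fun hs fun x hx ↦ ?_
        nth_rw 1 [gaussianTransport_monge_ampere hx]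
        rw [ENNReal.ofReal_mul (gaussianPDFReal_nonneg _ _ _), gaussianPDF]
        ring
    _ = ∫⁻ u in gaussianTransport f '' transportRegularSet f,
          (∫⁻ t, f t) * (gaussianPDF 0 1 u * k u) :=
        (lintegral_image_eq_lintegral_deriv_mul_of_monotoneOn hs
          (fun x hx ↦ (hasDerivAt_gaussianTransport hx).hasDerivWithinAt)
          (strictMonoOn_gaussianTransport f).monotoneOn
          (fun u ↦ (∫⁻ t, f t) * (gaussianPDF 0 1 u * k u))).symm
    _ = _ := by
        rw [lintegral_const_mul _ (by fun_prop), gaussianReal_of_var_ne_zero _ one_ne_zero,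
          setLIntegral_withDensity_eq_setLIntegral_mul _ (measurable_gaussianPDF 0 1) hk
            (measurableSet_image_gaussianTransport hf)]
        rfl

lemma ae_mem_image_gaussianTransport (hf : Measurable f) (h0 : ∫⁻ t, f t ≠ 0)
    (htop : ∫⁻ t, f t ≠ ∞) :
    ∀ᵐ u ∂gaussianReal 0 1, u ∈ gaussianTransport f '' transportRegularSet f := by
  refine (mem_ae_iff_prob_eq_one (measurableSet_image_gaussianTransport hf)).2 ?_
  have h := lintegral_mul_comp_gaussianTransport_eq_setLIntegral hf htop
    (measurable_const (a := (1 : ℝ≥0∞)))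
  simp only [mul_one, setLIntegral_one] at h
  exact (ENNReal.mul_right_inj h0 htop).1 (by rw [mul_one, ← h])

lemma lintegral_mul_comp_gaussianTransport (hf : Measurable f) (htop : ∫⁻ t, f t ≠ ∞)
    {k : ℝ → ℝ≥0∞} (hk : Measurable k) :
    ∫⁻ x, f x * k (gaussianTransport f x) = (∫⁻ t, f t) * ∫⁻ u, k u ∂gaussianReal 0 1 := by
  rw [lintegral_mul_comp_gaussianTransport_eq_setLIntegral hf htop hk]
  rcases eq_or_ne (∫⁻ t, f t) 0 with h0 | h0
  · simp only [h0, zero_mul]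
  · rw [Measure.restrict_eq_self_of_ae_mem (ae_mem_image_gaussianTransport hf h0 htop)]

end Transport

section RealLine

variable {p q : ℝ}

lemma gaussianPDFReal_rpow_mul_rpow_mul_exp (hp : 0 ≤ p) (hq : 0 ≤ q) (hpq : p + q = 1)
    (u v : ℝ) :
    gaussianPDFReal 0 1 u ^ q * gaussianPDFReal 0 1 v ^ p * Real.exp (√(p * q) * (u * v))
      = gaussianPDFReal 0 1 (√q * u - √p * v) := by
  have hc : 0 < (√(2 * Real.pi))⁻¹ := by positivity
  simp only [gaussianPDFReal, NNReal.coe_one, mul_one, sub_zero]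
  rw [Real.mul_rpow hc.le (Real.exp_pos _).le, Real.mul_rpow hc.le (Real.exp_pos _).le,
    ← Real.exp_mul, ← Real.exp_mul, mul_mul_mul_comm, ← Real.rpow_add hc, add_comm q p, hpq,
    Real.rpow_one, mul_assoc, ← Real.exp_add, ← Real.exp_add, Real.sqrt_mul hp]
  congr 2
  linear_combination u ^ 2 / 2 * Real.sq_sqrt hq + v ^ 2 / 2 * Real.sq_sqrt hp

lemma rpow_mul_rpow_le_mul_sqrt_add_sqrt (hp : 0 < p) (hq : 0 < q) (hpq : p + q = 1) {d e : ℝ}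
    (hd : 0 ≤ d) (he : 0 ≤ e) :
    d ^ q * e ^ p ≤ √p ^ p * √q ^ q * (√q * d + √p * e) := by
  have hsp := Real.sqrt_pos.2 hp
  have hsq := Real.sqrt_pos.2 hq
  calc d ^ q * e ^ p = √p ^ p * √q ^ q * ((d / √q) ^ q * (e / √p) ^ p) := by
        rw [Real.div_rpow hd hsq.le, Real.div_rpow he hsp.le]
        field_simp
    _ ≤ √p ^ p * √q ^ q * (q * (d / √q) + p * (e / √p)) := by
        gcongr
        exact Real.geom_mean_le_arith_mean2_weighted hq.le hp.le (by positivity) (by positivity)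
          (by rwa [add_comm])
    _ = √p ^ p * √q ^ q * (√q * d + √p * e) := by
        rw [mul_div_left_comm, mul_div_left_comm p, Real.div_sqrt, Real.div_sqrt]
        ring

variable {f g : ℝ → ℝ≥0∞}

lemma rpow_mul_rpow_mul_exp_gaussianTransport_le (hp : 0 < p) (hq : 0 < q) (hpq : p + q = 1)
    {x y : ℝ} (hx : x ∈ transportRegularSet f) (hy : y ∈ transportRegularSet g) :
    f x ^ q * g y ^ p *
        ENNReal.ofReal (Real.exp (√(p * q) * (gaussianTransport f x * gaussianTransport g y))) ≤
      ENNReal.ofReal (√q * deriv (gaussianTransport f) x + √p * deriv (gaussianTransport g) y) *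
        (ENNReal.ofReal (√p ^ p * √q ^ q) * ((∫⁻ t, f t) ^ q * (∫⁻ t, g t) ^ p) *
          gaussianPDF 0 1 (√q * gaussianTransport f x - √p * gaussianTransport g y)) := by
  have hd := deriv_gaussianTransport_pos hx
  have he := deriv_gaussianTransport_pos hy
  rw [gaussianTransport_monge_ampere hx, gaussianTransport_monge_ampere hy]
  set d := deriv (gaussianTransport f) x
  set e := deriv (gaussianTransport g) y
  set u := gaussianTransport f x
  set v := gaussianTransport g y
  have hu := gaussianPDFReal_pos 0 1 u one_ne_zero
  have hv := gaussianPDFReal_pos 0 1 v one_ne_zero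
  have hreal : (gaussianPDFReal 0 1 u * d) ^ q * (gaussianPDFReal 0 1 v * e) ^ p *
      Real.exp (√(p * q) * (u * v)) ≤
      (√q * d + √p * e) * (√p ^ p * √q ^ q * gaussianPDFReal 0 1 (√q * u - √p * v)) := by
    rw [← gaussianPDFReal_rpow_mul_rpow_mul_exp hp.le hq.le hpq, Real.mul_rpow hu.le hd.le,
      Real.mul_rpow hv.le he.le]
    have := mul_le_mul_of_nonneg_right (rpow_mul_rpow_le_mul_sqrt_add_sqrt hp hq hpq hd.le he.le)
      (show 0 ≤ gaussianPDFReal 0 1 u ^ q * gaussianPDFReal 0 1 v ^ p *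
        Real.exp (√(p * q) * (u * v)) by positivity)
    linarith
  rw [ENNReal.mul_rpow_of_nonneg _ _ hq.le, ENNReal.mul_rpow_of_nonneg _ _ hp.le,
    ENNReal.ofReal_rpow_of_pos (by positivity), ENNReal.ofReal_rpow_of_pos (by positivity)]
  calc _ = (∫⁻ t, f t) ^ q * (∫⁻ t, g t) ^ p * ENNReal.ofReal ((gaussianPDFReal 0 1 u * d) ^ q *
          (gaussianPDFReal 0 1 v * e) ^ p * Real.exp (√(p * q) * (u * v))) := by
        rw [ENNReal.ofReal_mul (by positivity), ENNReal.ofReal_mul (by positivity)]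
        ring
    _ ≤ (∫⁻ t, f t) ^ q * (∫⁻ t, g t) ^ p * ENNReal.ofReal ((√q * d + √p * e) *
          (√p ^ p * √q ^ q * gaussianPDFReal 0 1 (√q * u - √p * v))) := by
        gcongr
    _ = _ := by
        rw [ENNReal.ofReal_mul (by positivity), ENNReal.ofReal_mul (by positivity), gaussianPDF]
        ring

/-- The change of variables which turns the weighted convolution on the line into a Gaussian
integral. -/
noncomputable def mixedTransport (p q : ℝ) (f g : ℝ → ℝ≥0∞) (z x : ℝ) : ℝ :=
  √q * gaussianTransport f x - √p * gaussianTransport g (z - x)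

lemma hasDerivAt_mixedTransport (p q : ℝ) {x z : ℝ} (hx : x ∈ transportRegularSet f)
    (hxz : z - x ∈ transportRegularSet g) :
    HasDerivAt (mixedTransport p q f g z)
      (√q * deriv (gaussianTransport f) x + √p * deriv (gaussianTransport g) (z - x)) x := by
  have hg := (hasDerivAt_gaussianTransport hxz).comp x ((hasDerivAt_id x).const_sub z)
  convert! ((hasDerivAt_gaussianTransport hx).const_mul √q).sub (hg.const_mul √p) using 1
  ring

lemma monotoneOn_mixedTransport (p q : ℝ) (f g : ℝ → ℝ≥0∞) (z : ℝ) :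
    MonotoneOn (mixedTransport p q f g z)
      (transportRegularSet f ∩ (fun x ↦ z - x) ⁻¹' transportRegularSet g) := by
  intro x hx y hy hxy
  have hf := (strictMonoOn_gaussianTransport f).monotoneOn hx.1 hy.1 hxy
  have hg := (strictMonoOn_gaussianTransport g).monotoneOn hy.2 hx.2 (sub_le_sub_left hxy z)
  unfold mixedTransport
  gcongr

lemma lintegral_rpow_mul_rpow_mul_exp_gaussianTransport_le (hp : 0 < p) (hq : 0 < q)
    (hpq : p + q = 1) (hf : Measurable f) (hg : Measurable g) (hftop : ∫⁻ t, f t ≠ ∞)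
    (hgtop : ∫⁻ t, g t ≠ ∞) (z : ℝ) :
    ∫⁻ x, f x ^ q * g (z - x) ^ p * ENNReal.ofReal
        (Real.exp (√(p * q) * (gaussianTransport f x * gaussianTransport g (z - x))))
      ≤ ENNReal.ofReal (√p ^ p * √q ^ q) * ((∫⁻ t, f t) ^ q * (∫⁻ t, g t) ^ p) := by
  set C := ENNReal.ofReal (√p ^ p * √q ^ q) * ((∫⁻ t, f t) ^ q * (∫⁻ t, g t) ^ p)
  set s := transportRegularSet f ∩ (fun x ↦ z - x) ⁻¹' transportRegularSet g
  have hs : MeasurableSet s := (measurableSet_transportRegularSet hf).inter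
    ((measurable_const.sub measurable_id) (measurableSet_transportRegularSet hg))
  have hg0 : ∀ᵐ x, z - x ∉ transportRegularSet g → g (z - x) = 0 :=
    (Measure.measurePreserving_sub_left volume z).quasiMeasurePreserving.ae
      (ae_eq_zero_of_notMem_transportRegularSet hg hgtop)
  calc _ = ∫⁻ x in s, f x ^ q * g (z - x) ^ p * ENNReal.ofReal
        (Real.exp (√(p * q) * (gaussianTransport f x * gaussianTransport g (z - x)))) := by
        refine (setLIntegral_eq_lintegral_of_ae_compl_eq_zero hs ?_).symm
        filter_upwards [ae_eq_zero_of_notMem_transportRegularSet hf hftop, hg0] with x hfx hgx hxs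
        rcases not_and_or.1 hxs with h | h
        · rw [hfx h, ENNReal.zero_rpow_of_pos hq, zero_mul, zero_mul]
        · rw [hgx h, ENNReal.zero_rpow_of_pos hp, mul_zero, zero_mul]
    _ ≤ ∫⁻ x in s, ENNReal.ofReal
          (√q * deriv (gaussianTransport f) x + √p * deriv (gaussianTransport g) (z - x)) *
          (C * gaussianPDF 0 1 (mixedTransport p q f g z x)) :=
        setLIntegral_mono' hs fun x hx ↦
          rpow_mul_rpow_mul_exp_gaussianTransport_le hp hq hpq hx.1 hx.2
    _ = ∫⁻ u in mixedTransport p q f g z '' s, C * gaussianPDF 0 1 u :=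
        (lintegral_image_eq_lintegral_deriv_mul_of_monotoneOn hs
          (fun x hx ↦ (hasDerivAt_mixedTransport p q hx.1 hx.2).hasDerivWithinAt)
          (monotoneOn_mixedTransport p q f g z) (fun u ↦ C * gaussianPDF 0 1 u)).symm
    _ ≤ ∫⁻ u, C * gaussianPDF 0 1 u := setLIntegral_le_lintegral _ _
    _ = C := by
        rw [lintegral_const_mul _ (measurable_gaussianPDF 0 1),
          lintegral_gaussianPDF_eq_one 0 one_ne_zero, mul_one]

end RealLine

/-! ### Gaussian weights -/

/-- The function `L` is a Gaussian weight for the densities `f` and `g` in dimension `N` if the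
convolution of `f ^ q` and `g ^ p` weighted by `exp L` obeys the sharp bound, while under `f ⊗ g`
the exponential moments of `L` are those of `√(p * q) * ⟪X, Y⟫` for independent standard Gaussian
vectors `X` and `Y` in `ℝ^N`. -/
structure IsGaussianWeight {E : Type*} [MeasurableSpace E] [Sub E] (μ : Measure E) (N : ℕ)
    (p q : ℝ) (f g : E → ℝ≥0∞) (L : E × E → ℝ) : Prop where
  convolution_le (z : E) :
    ∫⁻ x, f x ^ q * g (z - x) ^ p * ENNReal.ofReal (Real.exp (L (x, z - x))) ∂μ ≤
      ENNReal.ofReal (√p ^ p * √q ^ q) ^ N * ((∫⁻ x, f x ∂μ) ^ q * (∫⁻ y, g y ∂μ) ^ p)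
  exp_moment_eq (s : ℝ) (hs : s ^ 2 * (p * q) < 1) :
    ∫⁻ x, ∫⁻ y, f x * g y * ENNReal.ofReal (Real.exp (s * L (x, y))) ∂μ ∂μ =
      ENNReal.ofReal (√(1 - s ^ 2 * (p * q)))⁻¹ ^ N * ((∫⁻ x, f x ∂μ) * ∫⁻ y, g y ∂μ)

section RealLineWeight

variable {p q : ℝ}

lemma measurable_gaussianTransport_param {α : Type*} [MeasurableSpace α] {f : α × ℝ → ℝ≥0∞}
    (hf : Measurable f) {u : α → ℝ} (hu : Measurable u) :
    Measurable fun a ↦ gaussianTransport (fun t ↦ f (a, t)) (u a) := by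
  refine measurable_gaussianQuantile.comp (Measurable.ennreal_toReal (Measurable.div ?_ ?_))
  · have hIic : ∀ a, ∫⁻ t in Iic (u a), f (a, t)
        = ∫⁻ t, {b : α × ℝ | b.2 ≤ u b.1}.indicator f (a, t) :=
      fun a ↦ (lintegral_indicator measurableSet_Iic _).symm
    simp only [hIic]
    exact Measurable.lintegral_prod_right'
      (hf.indicator (measurableSet_le measurable_snd (hu.comp measurable_fst)))
  · exact hf.lintegral_prod_right'

lemma measurable_gaussianTransport {f : ℝ → ℝ≥0∞} (hf : Measurable f) :
    Measurable (gaussianTransport f) :=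
  measurable_gaussianTransport_param (f := fun b : ℝ × ℝ ↦ f b.2) (by fun_prop) measurable_id

lemma lintegral_lintegral_exp_mul_gaussianTransport {f g : ℝ → ℝ≥0∞} (hf : Measurable f)
    (hg : Measurable g) (hftop : ∫⁻ t, f t ≠ ∞) (hgtop : ∫⁻ t, g t ≠ ∞) {c : ℝ} (hc : c ^ 2 < 1) :
    ∫⁻ x, ∫⁻ y, f x * g y *
        ENNReal.ofReal (Real.exp (c * (gaussianTransport f x * gaussianTransport g y))) =
      ENNReal.ofReal (√(1 - c ^ 2))⁻¹ * ((∫⁻ x, f x) * ∫⁻ y, g y) := by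
  have hinner : ∀ x, ∫⁻ y, f x * g y *
      ENNReal.ofReal (Real.exp (c * (gaussianTransport f x * gaussianTransport g y))) =
      (∫⁻ y, g y) * (f x *
        ∫⁻ v, ENNReal.ofReal (Real.exp (c * (gaussianTransport f x * v))) ∂gaussianReal 0 1) := by
    have := measurable_gaussianTransport hg
    intro x
    simp only [mul_assoc]
    rw [lintegral_const_mul _ (by fun_prop), lintegral_mul_comp_gaussianTransport hg hgtop
      (k := fun v ↦ ENNReal.ofReal (Real.exp (c * (gaussianTransport f x * v)))) (by fun_prop)]
    ring
  have hk : Measurable fun u : ℝ ↦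
      ∫⁻ v, ENNReal.ofReal (Real.exp (c * (u * v))) ∂gaussianReal 0 1 :=
    Measurable.lintegral_prod_right'
      (f := fun b : ℝ × ℝ ↦ ENNReal.ofReal (Real.exp (c * (b.1 * b.2)))) (by fun_prop)
  rw [lintegral_congr hinner, lintegral_const_mul' _ _ hgtop,
    lintegral_mul_comp_gaussianTransport hf hftop hk, lintegral_lintegral_exp_mul_gaussianReal hc]
  ring

lemma isGaussianWeight_real (hp : 0 < p) (hq : 0 < q) (hpq : p + q = 1) {f g : ℝ → ℝ≥0∞}
    (hf : Measurable f) (hg : Measurable g) (hftop : ∫⁻ t, f t ≠ ∞) (hgtop : ∫⁻ t, g t ≠ ∞) :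
    IsGaussianWeight volume 1 p q f g
      fun a ↦ √(p * q) * (gaussianTransport f a.1 * gaussianTransport g a.2) where
  convolution_le z := by
    rw [pow_one]
    exact lintegral_rpow_mul_rpow_mul_exp_gaussianTransport_le hp hq hpq hf hg hftop hgtop z
  exp_moment_eq s hs := by
    have hsq : (s * √(p * q)) ^ 2 = s ^ 2 * (p * q) := by
      rw [mul_pow, Real.sq_sqrt (by positivity)]
    simp only [← mul_assoc s]
    rw [lintegral_lintegral_exp_mul_gaussianTransport hf hg hftop hgtop (hsq.trans_lt hs), hsq,
      pow_one]

end RealLineWeight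

namespace IsGaussianWeight

lemma of_subsingleton {E : Type*} [MeasurableSpace E] [Sub E] [Subsingleton E] [Nonempty E]
    (μ : Measure E) [IsProbabilityMeasure μ] (p q : ℝ) (f g : E → ℝ≥0∞) :
    IsGaussianWeight μ 0 p q f g 0 := by
  have : Unique E := uniqueOfSubsingleton (Classical.arbitrary E)
  constructor
  · intro z
    simp [lintegral_unique, Subsingleton.elim _ (default : E)]
  · intro s _
    simp [lintegral_unique]

section Map

variable {E F : Type*} [MeasurableSpace E] [Sub E] [MeasurableSpace F] [Sub F] {μ : Measure E}
  {ν : Measure F} {N : ℕ} {p q : ℝ}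

lemma comp_measurableEquiv (e : E ≃ᵐ F) (he : MeasurePreserving e μ ν)
    (hsub : ∀ x y, e (x - y) = e x - e y) {f g : E → ℝ≥0∞} {L : F × F → ℝ}
    (hL : IsGaussianWeight ν N p q (f ∘ e.symm) (g ∘ e.symm) L) :
    IsGaussianWeight μ N p q f g (L ∘ Prod.map e e) := by
  have hint : ∀ k : F → ℝ≥0∞, ∫⁻ y, k y ∂ν = ∫⁻ x, k (e x) ∂μ := fun k ↦
    (he.lintegral_comp_emb e.measurableEmbedding k).symm
  constructor
  · intro z
    have hsymm : ∀ x, e.symm (e z - e x) = z - x := fun x ↦ by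
      rw [← hsub, MeasurableEquiv.symm_apply_apply]
    simpa only [hint, Function.comp_apply, Prod.map_apply, hsub, hsymm,
      MeasurableEquiv.symm_apply_apply] using hL.convolution_le (e z)
  · intro s hs
    simpa only [hint, Function.comp_apply, Prod.map_apply, MeasurableEquiv.symm_apply_apply]
      using hL.exp_moment_eq s hs

lemma smul_measure (hp : 0 ≤ p) (hq : 0 ≤ q) (hpq : p + q = 1) {f g : E → ℝ≥0∞} {L : E × E → ℝ}
    (hL : IsGaussianWeight μ N p q f g L) {c : ℝ≥0∞} (hc : c ≠ ∞) :
    IsGaussianWeight (c • μ) N p q f g L := by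
  constructor
  · intro z
    have hcqp : c = c ^ q * c ^ p := by
      rw [← ENNReal.rpow_add_of_nonneg _ _ hq hp, add_comm, hpq, ENNReal.rpow_one]
    simp only [lintegral_smul_measure, smul_eq_mul]
    rw [ENNReal.mul_rpow_of_nonneg _ _ hq, ENNReal.mul_rpow_of_nonneg _ _ hp, mul_mul_mul_comm,
      ← hcqp, mul_left_comm]
    gcongr
    exact hL.convolution_le z
  · intro s hs
    simp only [lintegral_smul_measure, smul_eq_mul]
    rw [lintegral_const_mul' _ _ hc, hL.exp_moment_eq s hs]
    ring

end Map

end IsGaussianWeight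

lemma lintegral_lintegral_prod_prod {G E : Type*} [MeasurableSpace G] [MeasurableSpace E]
    {μ : Measure G} {ν : Measure E} [SFinite μ] [SFinite ν]
    {F : (G × E) × (G × E) → ℝ≥0∞} (hF : Measurable F) :
    ∫⁻ a, ∫⁻ b, F (a, b) ∂μ.prod ν ∂μ.prod ν
      = ∫⁻ s, ∫⁻ t, ∫⁻ x, ∫⁻ y, F ((s, x), (t, y)) ∂ν ∂ν ∂μ ∂μ := by
  rw [lintegral_prod _ hF.lintegral_prod_right'.aemeasurable]
  refine lintegral_congr fun s ↦ ?_
  have hinner : ∀ a, ∫⁻ b, F (a, b) ∂μ.prod ν = ∫⁻ t, ∫⁻ y, F (a, (t, y)) ∂ν ∂μ := fun a ↦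
    lintegral_prod _ (by fun_prop)
  simp only [hinner]
  refine lintegral_lintegral_swap (Measurable.aemeasurable ?_)
  exact Measurable.lintegral_prod_right'
    (f := fun b : (E × G) × E ↦ F ((s, b.1.1), (b.1.2, b.2))) (by fun_prop)

namespace IsGaussianWeight

section Prod

variable {G E : Type*} [MeasurableSpace G] [MeasurableSpace E] {μ : Measure G} {ν : Measure E}
  [SFinite ν] {M N : ℕ} {p q : ℝ} {f g : G × E → ℝ≥0∞} {L₁ : G × G → ℝ}
  {L₂ : (G × G) × E × E → ℝ}

/-- The weight on a product assembled from a weight on the first factor and a family of weights on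
the second one. -/
def prodWeight (L₁ : G × G → ℝ) (L₂ : (G × G) × E × E → ℝ) (a : (G × E) × G × E) : ℝ :=
  L₁ (a.1.1, a.2.1) + L₂ ((a.1.1, a.2.1), a.1.2, a.2.2)

lemma convolution_prodWeight_le [AddGroup G] [MeasurableAdd₂ G] [MeasurableNeg G] [Sub E]
    [MeasurableSub₂ E] [μ.IsAddLeftInvariant] [μ.IsNegInvariant] (hf : Measurable f)
    (hg : Measurable g) (hftop : ∫⁻ x, f x ∂μ.prod ν ≠ ∞) (hgtop : ∫⁻ y, g y ∂μ.prod ν ≠ ∞)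
    (hL₁ : Measurable L₁) (hL₂ : Measurable L₂)
    (h₁ : IsGaussianWeight μ M p q (fun s ↦ ∫⁻ x, f (s, x) ∂ν) (fun t ↦ ∫⁻ y, g (t, y) ∂ν) L₁)
    (h₂ : ∀ s t, ∫⁻ x, f (s, x) ∂ν ≠ ∞ → ∫⁻ y, g (t, y) ∂ν ≠ ∞ →
      IsGaussianWeight ν N p q (fun x ↦ f (s, x)) (fun y ↦ g (t, y)) fun a ↦ L₂ ((s, t), a))
    (z : G × E) :
    ∫⁻ x, f x ^ q * g (z - x) ^ p *
        ENNReal.ofReal (Real.exp (prodWeight L₁ L₂ (x, z - x))) ∂μ.prod ν ≤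
      ENNReal.ofReal (√p ^ p * √q ^ q) ^ (M + N) *
        ((∫⁻ x, f x ∂μ.prod ν) ^ q * (∫⁻ y, g y ∂μ.prod ν) ^ p) := by
  rw [lintegral_prod _ hf.aemeasurable] at hftop ⊢
  rw [lintegral_prod _ hg.aemeasurable] at hgtop ⊢
  set D := ENNReal.ofReal (√p ^ p * √q ^ q)
  obtain ⟨z₁, z₂⟩ := z
  have hgae : ∀ᵐ s ∂μ, ∫⁻ y, g (z₁ - s, y) ∂ν < ∞ :=
    (Measure.measurePreserving_sub_left μ z₁).quasiMeasurePreserving.ae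
      (ae_lt_top hg.lintegral_prod_right' hgtop)
  unfold prodWeight
  calc _ = ∫⁻ s, ∫⁻ x, ENNReal.ofReal (Real.exp (L₁ (s, z₁ - s))) *
        (f (s, x) ^ q * g (z₁ - s, z₂ - x) ^ p *
          ENNReal.ofReal (Real.exp (L₂ ((s, z₁ - s), x, z₂ - x)))) ∂ν ∂μ := by
        have hmeas : Measurable fun b : G × E ↦ f b ^ q * g (z₁ - b.1, z₂ - b.2) ^ p *
            ENNReal.ofReal (Real.exp (L₁ (b.1, z₁ - b.1) +
              L₂ ((b.1, z₁ - b.1), b.2, z₂ - b.2))) := by fun_prop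
        refine (lintegral_prod _ hmeas.aemeasurable).trans ?_
        refine lintegral_congr fun s ↦ lintegral_congr fun x ↦ ?_
        rw [Real.exp_add, ENNReal.ofReal_mul (Real.exp_pos _).le, mul_left_comm]
    _ ≤ ∫⁻ s, D ^ N * ((∫⁻ x, f (s, x) ∂ν) ^ q * (∫⁻ y, g (z₁ - s, y) ∂ν) ^ p *
          ENNReal.ofReal (Real.exp (L₁ (s, z₁ - s)))) ∂μ := by
        refine lintegral_mono_ae ?_
        filter_upwards [ae_lt_top hf.lintegral_prod_right' hftop, hgae] with s hfs hgs
        have h := (h₂ s (z₁ - s) hfs.ne hgs.ne).convolution_le z₂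
        rw [lintegral_const_mul' _ _ ENNReal.ofReal_ne_top, mul_comm, ← mul_assoc]
        exact mul_le_mul_left h _
    _ = D ^ N * ∫⁻ s, ((∫⁻ x, f (s, x) ∂ν) ^ q * (∫⁻ y, g (z₁ - s, y) ∂ν) ^ p *
          ENNReal.ofReal (Real.exp (L₁ (s, z₁ - s)))) ∂μ :=
        lintegral_const_mul' _ _ (ENNReal.pow_ne_top ENNReal.ofReal_ne_top)
    _ ≤ D ^ N * (D ^ M * _) := mul_le_mul_right (h₁.convolution_le z₁) _
    _ = _ := by
        rw [pow_add]
        ring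

lemma exp_moment_prodWeight_eq [Sub G] [Sub E] [SFinite μ] (hf : Measurable f)
    (hg : Measurable g) (hftop : ∫⁻ x, f x ∂μ.prod ν ≠ ∞) (hgtop : ∫⁻ y, g y ∂μ.prod ν ≠ ∞)
    (hL₁ : Measurable L₁) (hL₂ : Measurable L₂)
    (h₁ : IsGaussianWeight μ M p q (fun s ↦ ∫⁻ x, f (s, x) ∂ν) (fun t ↦ ∫⁻ y, g (t, y) ∂ν) L₁)
    (h₂ : ∀ s t, ∫⁻ x, f (s, x) ∂ν ≠ ∞ → ∫⁻ y, g (t, y) ∂ν ≠ ∞ →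
      IsGaussianWeight ν N p q (fun x ↦ f (s, x)) (fun y ↦ g (t, y)) fun a ↦ L₂ ((s, t), a))
    (σ : ℝ) (hσ : σ ^ 2 * (p * q) < 1) :
    ∫⁻ x, ∫⁻ y, f x * g y *
        ENNReal.ofReal (Real.exp (σ * prodWeight L₁ L₂ (x, y))) ∂μ.prod ν ∂μ.prod ν =
      ENNReal.ofReal (√(1 - σ ^ 2 * (p * q)))⁻¹ ^ (M + N) *
        ((∫⁻ x, f x ∂μ.prod ν) * ∫⁻ y, g y ∂μ.prod ν) := by
  rw [lintegral_prod _ hf.aemeasurable] at hftop ⊢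
  rw [lintegral_prod _ hg.aemeasurable] at hgtop ⊢
  set m := ENNReal.ofReal (√(1 - σ ^ 2 * (p * q)))⁻¹
  have hm : m ^ N ≠ ∞ := ENNReal.pow_ne_top ENNReal.ofReal_ne_top
  unfold prodWeight
  rw [lintegral_lintegral_prod_prod (F := fun b : (G × E) × (G × E) ↦ f b.1 * g b.2 *
    ENNReal.ofReal (Real.exp (σ * (L₁ (b.1.1, b.2.1) + L₂ ((b.1.1, b.2.1), b.1.2, b.2.2)))))
    (by fun_prop)]
  calc _ = ∫⁻ s, ∫⁻ t, m ^ N * ((∫⁻ x, f (s, x) ∂ν) * (∫⁻ y, g (t, y) ∂ν) *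
          ENNReal.ofReal (Real.exp (σ * L₁ (s, t)))) ∂μ ∂μ := by
        refine lintegral_congr_ae ?_
        filter_upwards [ae_lt_top hf.lintegral_prod_right' hftop] with s hfs
        refine lintegral_congr_ae ?_
        filter_upwards [ae_lt_top hg.lintegral_prod_right' hgtop] with t hgt
        simp only [mul_add, Real.exp_add, ENNReal.ofReal_mul (Real.exp_pos _).le,
          mul_left_comm _ (ENNReal.ofReal (Real.exp (σ * L₁ (s, t)))),
          lintegral_const_mul' _ _ (ENNReal.ofReal_ne_top (r := Real.exp (σ * L₁ (s, t))))]
        rw [(h₂ s t hfs.ne hgt.ne).exp_moment_eq σ hσ]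
        ring
    _ = m ^ N * (m ^ M * _) := by
        simp only [lintegral_const_mul' _ _ hm]
        rw [h₁.exp_moment_eq σ hσ]
    _ = _ := by
        rw [pow_add]
        ring

end Prod

end IsGaussianWeight

/-- Existence of Gaussian weights for densities depending measurably on a parameter, with a weight
depending measurably on the parameter. The parameter makes the property stable under products: the
weight on the second factor depends on the point of the first one. -/
def HasGaussianWeights {E : Type} [MeasurableSpace E] [Sub E] (μ : Measure E) (N : ℕ)
    (p q : ℝ) : Prop :=
  ∀ (Ω : Type) [MeasurableSpace Ω] (f g : Ω × E → ℝ≥0∞), Measurable f → Measurable g →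
    ∃ L : Ω × E × E → ℝ, Measurable L ∧
      ∀ ω, ∫⁻ x, f (ω, x) ∂μ ≠ ∞ → ∫⁻ y, g (ω, y) ∂μ ≠ ∞ →
        IsGaussianWeight μ N p q (fun x ↦ f (ω, x)) (fun y ↦ g (ω, y)) fun a ↦ L (ω, a)

lemma hasGaussianWeights_real {p q : ℝ} (hp : 0 < p) (hq : 0 < q) (hpq : p + q = 1) :
    HasGaussianWeights (volume : Measure ℝ) 1 p q := by
  intro Ω _ f g hf hg
  have hP : Measurable fun a : Ω × ℝ × ℝ ↦ gaussianTransport (fun t ↦ f (a.1, t)) a.2.1 :=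
    measurable_gaussianTransport_param (f := fun b : (Ω × ℝ × ℝ) × ℝ ↦ f (b.1.1, b.2))
      (by fun_prop) (by fun_prop)
  have hQ : Measurable fun a : Ω × ℝ × ℝ ↦ gaussianTransport (fun t ↦ g (a.1, t)) a.2.2 :=
    measurable_gaussianTransport_param (f := fun b : (Ω × ℝ × ℝ) × ℝ ↦ g (b.1.1, b.2))
      (by fun_prop) (by fun_prop)
  refine ⟨fun a ↦ √(p * q) * (gaussianTransport (fun t ↦ f (a.1, t)) a.2.1 *
    gaussianTransport (fun t ↦ g (a.1, t)) a.2.2), (hP.mul hQ).const_mul _, fun ω hfω hgω ↦ ?_⟩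
  have hfm : Measurable fun t ↦ f (ω, t) := hf.comp measurable_prodMk_left
  have hgm : Measurable fun t ↦ g (ω, t) := hg.comp measurable_prodMk_left
  exact isGaussianWeight_real hp hq hpq hfm hgm hfω hgω

namespace HasGaussianWeights

lemma prod {G E : Type} [MeasurableSpace G] [MeasurableSpace E] [AddGroup G] [MeasurableAdd₂ G]
    [MeasurableNeg G] [Sub E] [MeasurableSub₂ E] {μ : Measure G} {ν : Measure E} [SFinite μ]
    [SFinite ν] [μ.IsAddLeftInvariant] [μ.IsNegInvariant] {M N : ℕ} {p q : ℝ}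
    (hμ : HasGaussianWeights μ M p q) (hν : HasGaussianWeights ν N p q) :
    HasGaussianWeights (μ.prod ν) (M + N) p q := by
  intro Ω _ f g hf hg
  obtain ⟨L₁, hL₁, h₁⟩ := hμ Ω (fun a ↦ ∫⁻ x, f (a.1, a.2, x) ∂ν) (fun a ↦ ∫⁻ y, g (a.1, a.2, y) ∂ν)
    (Measurable.lintegral_prod_right' (f := fun b : (Ω × G) × E ↦ f (b.1.1, b.1.2, b.2))
      (by fun_prop))
    (Measurable.lintegral_prod_right' (f := fun b : (Ω × G) × E ↦ g (b.1.1, b.1.2, b.2))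
      (by fun_prop))
  obtain ⟨L₂, hL₂, h₂⟩ := hν (Ω × G × G) (fun a ↦ f (a.1.1, a.1.2.1, a.2))
    (fun a ↦ g (a.1.1, a.1.2.2, a.2)) (by fun_prop) (by fun_prop)
  refine ⟨fun a ↦ IsGaussianWeight.prodWeight (fun b ↦ L₁ (a.1, b))
    (fun b ↦ L₂ ((a.1, b.1), b.2)) a.2, ?_, fun ω hfω hgω ↦ ?_⟩
  · unfold IsGaussianWeight.prodWeight
    fun_prop
  · have hfm : Measurable fun x ↦ f (ω, x) := hf.comp measurable_prodMk_left
    have hgm : Measurable fun y ↦ g (ω, y) := hg.comp measurable_prodMk_left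
    have hω := h₁ ω (by rwa [← lintegral_prod _ hfm.aemeasurable])
      (by rwa [← lintegral_prod _ hgm.aemeasurable])
    have hω' := fun s t ↦ h₂ (ω, s, t)
    have hL₁ω : Measurable fun b ↦ L₁ (ω, b) := hL₁.comp measurable_prodMk_left
    have hL₂ω : Measurable fun b : (G × G) × E × E ↦ L₂ ((ω, b.1), b.2) := by fun_prop
    exact ⟨IsGaussianWeight.convolution_prodWeight_le hfm hgm hfω hgω hL₁ω hL₂ω hω hω',
      IsGaussianWeight.exp_moment_prodWeight_eq hfm hgm hfω hgω hL₁ω hL₂ω hω hω'⟩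

lemma of_subsingleton {E : Type} [MeasurableSpace E] [Sub E] [Subsingleton E] [Nonempty E]
    (μ : Measure E) [IsProbabilityMeasure μ] (p q : ℝ) : HasGaussianWeights μ 0 p q :=
  fun _ _ _ _ _ _ ↦ ⟨0, measurable_const, fun _ _ _ ↦ .of_subsingleton μ p q _ _⟩

lemma comp_measurableEquiv {E F : Type} [MeasurableSpace E] [Sub E] [MeasurableSpace F] [Sub F]
    {μ : Measure E} {ν : Measure F} {N : ℕ} {p q : ℝ} (hν : HasGaussianWeights ν N p q)
    (e : E ≃ᵐ F) (he : MeasurePreserving e μ ν) (hsub : ∀ x y, e (x - y) = e x - e y) :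
    HasGaussianWeights μ N p q := by
  intro Ω _ f g hf hg
  obtain ⟨L, hL, h⟩ := hν Ω (fun a ↦ f (a.1, e.symm a.2)) (fun a ↦ g (a.1, e.symm a.2))
    (by fun_prop) (by fun_prop)
  refine ⟨fun a ↦ L (a.1, Prod.map e e a.2), by fun_prop, fun ω hfω hgω ↦ ?_⟩
  have hint : ∀ k : E → ℝ≥0∞, ∫⁻ y, k (e.symm y) ∂ν = ∫⁻ x, k x ∂μ := fun k ↦
    (he.symm e).lintegral_comp_emb e.symm.measurableEmbedding k
  exact IsGaussianWeight.comp_measurableEquiv (f := fun x ↦ f (ω, x)) (g := fun y ↦ g (ω, y))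
    (L := fun a ↦ L (ω, a)) e he hsub
    (h ω (by rwa [hint fun x ↦ f (ω, x)]) (by rwa [hint fun y ↦ g (ω, y)]))

end HasGaussianWeights

lemma hasGaussianWeights_pi {p q : ℝ} (hp : 0 < p) (hq : 0 < q) (hpq : p + q = 1) (n : ℕ) :
    HasGaussianWeights (volume : Measure (Fin n → ℝ)) n p q := by
  induction n with
  | zero =>
    have : IsProbabilityMeasure (volume : Measure (Fin 0 → ℝ)) := ⟨by simp [volume_pi]⟩
    exact .of_subsingleton _ p q
  | succ n ih =>
    have h := (hasGaussianWeights_real hp hq hpq).prod ih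
    rw [add_comm] at h
    exact h.comp_measurableEquiv (MeasurableEquiv.piFinSuccAbove (fun _ ↦ ℝ) 0)
      (volume_preserving_piFinSuccAbove (fun _ ↦ ℝ) 0) fun _ _ ↦ rfl

open Module in
lemma exists_isGaussianWeight {E : Type*} [NormedAddCommGroup E] [NormedSpace ℝ E]
    [FiniteDimensional ℝ E] [MeasurableSpace E] [BorelSpace E] (μ : Measure E) [μ.IsAddHaarMeasure]
    {p q : ℝ} (hp : 0 < p) (hq : 0 < q) (hpq : p + q = 1) {f g : E → ℝ≥0∞} (hf : Measurable f)
    (hg : Measurable g) (hftop : ∫⁻ x, f x ∂μ ≠ ∞) (hgtop : ∫⁻ y, g y ∂μ ≠ ∞) :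
    ∃ L : E × E → ℝ, Measurable L ∧ IsGaussianWeight μ (finrank ℝ E) p q f g L := by
  let e : (Fin (finrank ℝ E) → ℝ) ≃L[ℝ] E := ContinuousLinearEquiv.ofFinrankEq (by simp)
  let e' := e.toHomeomorph.toMeasurableEquiv
  have he : MeasurePreserving e'.symm (Measure.map e volume) volume :=
    MeasurePreserving.symm e' ⟨e'.measurable, rfl⟩
  have := e.isAddHaarMeasure_map volume
  have hfin : ∀ k : E → ℝ≥0∞, ∫⁻ x, k x ∂μ ≠ ∞ → ∫⁻ x, k (e x) ≠ ∞ := by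
    intro k hk
    have hmap : ∫⁻ x, k x ∂(Measure.map e volume) = ∫⁻ x, k (e x) := lintegral_map_equiv k e'
    rw [← hmap, Measure.isAddLeftInvariant_eq_smul (Measure.map e volume) μ,
      lintegral_smul_measure]
    exact ENNReal.mul_ne_top ENNReal.coe_ne_top hk
  obtain ⟨L, hL, h⟩ := hasGaussianWeights_pi hp hq hpq (finrank ℝ E) Unit (fun a ↦ f (e a.2))
    (fun a ↦ g (e a.2)) (by fun_prop) (by fun_prop)
  have hmap : IsGaussianWeight (Measure.map e volume) (finrank ℝ E) p q f g
      ((fun a ↦ L ((), a)) ∘ Prod.map e'.symm e'.symm) :=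
    (h () (hfin f hftop) (hfin g hgtop)).comp_measurableEquiv e'.symm he e.symm.map_sub
  rw [Measure.isAddLeftInvariant_eq_smul μ (Measure.map e volume)]
  exact ⟨_, by fun_prop, hmap.smul_measure hp.le hq.le hpq ENNReal.coe_ne_top⟩

lemma one_add_half_le_inv_sqrt_pow {t : ℝ} {n : ℕ} (hn : 0 < n) (ht0 : 0 ≤ t) (ht1 : t < 1) :
    1 + t / 2 ≤ (√(1 - t / n))⁻¹ ^ n := by
  have hn' : (1 : ℝ) ≤ n := by exact_mod_cast hn
  have hu0 : 0 ≤ t / n := by positivity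
  have hu1 : t / n < 1 := (div_le_self ht0 hn').trans_lt ht1
  have hpos : 0 < √(1 - t / n) := Real.sqrt_pos.2 (by linarith)
  have hsqrt : √(1 - t / n) ≤ 1 - t / n / 2 :=
    Real.sqrt_le_iff.2 ⟨by linarith, by nlinarith [sq_nonneg (t / n)]⟩
  have hinv : 1 + t / n / 2 ≤ (√(1 - t / n))⁻¹ := by
    rw [le_inv_comm₀ (by positivity) hpos]
    refine hsqrt.trans ?_
    rw [← one_div, le_div_iff₀ (by positivity)]
    nlinarith [sq_nonneg (t / n)]
  calc 1 + t / 2 = 1 + n * (t / n / 2) := by field_simp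
    _ ≤ (1 + t / n / 2) ^ n := one_add_mul_le_pow (by linarith) n
    _ ≤ _ := by gcongr

lemma inv_sqrt_pow_le_two {t : ℝ} {n : ℕ} (hn : 0 < n) (ht0 : 0 ≤ t) (ht1 : t ≤ 1 / 2) :
    (√(1 - t / n))⁻¹ ^ n ≤ 2 := by
  have hn' : (1 : ℝ) ≤ n := by exact_mod_cast hn
  have hu0 : 0 ≤ t / n := by positivity
  have hu1 : t / n ≤ 1 / 2 := (div_le_self ht0 hn').trans ht1
  have hsqrt : 1 - t / n ≤ √(1 - t / n) := Real.le_sqrt_of_sq_le (by nlinarith)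
  have hpow : 1 - t ≤ √(1 - t / n) ^ n := by
    calc 1 - t = 1 + n * (-(t / n)) := by field_simp; ring
      _ ≤ (1 + -(t / n)) ^ n := one_add_mul_le_pow (by linarith) n
      _ ≤ _ := pow_le_pow_left₀ (by linarith) (by linarith) n
  rw [inv_pow]
  exact inv_le_of_inv_le₀ (by norm_num) (by linarith)

section ExponentialMoments

variable {α : Type*} [MeasurableSpace α] (ν : Measure α)

lemma lintegral_exp_mul_le {s : ℝ} (hs0 : 0 ≤ s) (hs1 : s ≤ 1) (u : α → ℝ) :
    ∫⁻ x, ENNReal.ofReal (Real.exp (s * u x)) ∂ν ≤ ENNReal.ofReal (1 - s) * ν univ +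
      ENNReal.ofReal s * ∫⁻ x, ENNReal.ofReal (Real.exp (u x)) ∂ν := by
  rw [← lintegral_const, ← lintegral_const_mul' _ _ ENNReal.ofReal_ne_top,
    ← lintegral_add_left measurable_const]
  refine lintegral_mono fun x ↦ ?_
  rw [← ENNReal.ofReal_mul hs0, ← ENNReal.ofReal_add (by linarith) (by positivity)]
  refine ENNReal.ofReal_le_ofReal ?_
  simpa using convexOn_exp.2 (mem_univ (0 : ℝ)) (mem_univ (u x)) (by linarith : 0 ≤ 1 - s) hs0
    (by ring)

lemma lintegral_exp_le_lintegral_exp_two_mul {t : ℝ} (ht : 0 < t) (u : α → ℝ) :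
    ∫⁻ x, ENNReal.ofReal (Real.exp (u x)) ∂ν ≤
      ENNReal.ofReal t * ∫⁻ x, ENNReal.ofReal (Real.exp (2 * u x)) ∂ν +
        ENNReal.ofReal (4 * t)⁻¹ * ν univ := by
  rw [← lintegral_const, ← lintegral_const_mul' _ _ ENNReal.ofReal_ne_top,
    ← lintegral_add_right _ measurable_const]
  refine lintegral_mono fun x ↦ ?_
  rw [← ENNReal.ofReal_mul ht.le, ← ENNReal.ofReal_add (by positivity) (by positivity), two_mul,
    Real.exp_add]
  refine ENNReal.ofReal_le_ofReal (sub_nonneg.1 ?_)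
  have hsq : t * (Real.exp (u x) * Real.exp (u x)) + (4 * t)⁻¹ - Real.exp (u x) =
      t * (Real.exp (u x) - (2 * t)⁻¹) ^ 2 := by
    field_simp
    ring
  rw [hsq]
  positivity

lemma measure_univ_le_setLIntegral_exp [IsFiniteMeasure ν] {u : α → ℝ} {Θ : Set α}
    (hΘ : MeasurableSet Θ) {s κ : ℝ} (hs0 : 0 < s) (hs1 : s ≤ 1) (hκ : 0 < κ)
    (hlow : ENNReal.ofReal (1 + κ ^ 2 / 2) * ν univ ≤ ∫⁻ x, ENNReal.ofReal (Real.exp (s * u x)) ∂ν)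
    (hup : ∫⁻ x, ENNReal.ofReal (Real.exp (2 * s * u x)) ∂ν ≤ 2 * ν univ)
    (hΘc : ν Θᶜ ≤ ENNReal.ofReal (κ ^ 4 / 8) * ν univ) :
    ν univ ≤ ∫⁻ x in Θ, ENNReal.ofReal (Real.exp (u x)) ∂ν := by
  set I := ∫⁻ x in Θ, ENNReal.ofReal (Real.exp (u x)) ∂ν
  have hin : ∫⁻ x in Θ, ENNReal.ofReal (Real.exp (s * u x)) ∂ν
      ≤ ENNReal.ofReal (1 - s) * ν univ + ENNReal.ofReal s * I := by
    refine (lintegral_exp_mul_le _ hs0.le hs1 u).trans ?_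
    gcongr
    exact Measure.restrict_le_self
  have hout : ∫⁻ x in Θᶜ, ENNReal.ofReal (Real.exp (s * u x)) ∂ν
      ≤ ENNReal.ofReal (κ ^ 2 / 2) * ν univ := by
    calc _ ≤ ENNReal.ofReal (κ ^ 2 / 8) *
          ∫⁻ x in Θᶜ, ENNReal.ofReal (Real.exp (2 * (s * u x))) ∂ν +
          ENNReal.ofReal (4 * (κ ^ 2 / 8))⁻¹ * (ν.restrict Θᶜ) univ :=
          lintegral_exp_le_lintegral_exp_two_mul _ (by positivity) _
      _ ≤ ENNReal.ofReal (κ ^ 2 / 8) * (ENNReal.ofReal 2 * ν univ) +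
          ENNReal.ofReal (4 * (κ ^ 2 / 8))⁻¹ * (ENNReal.ofReal (κ ^ 4 / 8) * ν univ) := by
          rw [Measure.restrict_apply_univ, ENNReal.ofReal_ofNat]
          gcongr
          simpa only [mul_assoc] using (setLIntegral_le_lintegral _ _).trans hup
      _ = _ := by
          rw [← mul_assoc, ← mul_assoc, ← add_mul, ← ENNReal.ofReal_mul (by positivity),
            ← ENNReal.ofReal_mul (by positivity),
            ← ENNReal.ofReal_add (by positivity) (by positivity)]
          congr 2
          field_simp
          ring
  rw [← lintegral_add_compl _ hΘ, ENNReal.ofReal_add zero_le_one (by positivity), add_mul] at hlow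
  have hconvex :=
    (ENNReal.add_le_add_iff_right (by finiteness)).1 (hlow.trans (add_le_add hin hout))
  have hone : ENNReal.ofReal 1 * ν univ = ENNReal.ofReal (1 - s) * ν univ +
      ENNReal.ofReal s * ν univ := by
    rw [← add_mul, ← ENNReal.ofReal_add (by linarith) hs0.le, sub_add_cancel]
  rw [hone] at hconvex
  exact (ENNReal.mul_le_mul_iff_right (ENNReal.ofReal_pos.2 hs0).ne' ENNReal.ofReal_ne_top).1
    ((ENNReal.add_le_add_iff_left (by finiteness)).1 hconvex)

end ExponentialMoments

/-- The restricted Minkowski sum `A +_Θ B` in an arbitrary additive structure. It depends on `Θ`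
only, so `A` and `B` are not arguments. -/
def partialSumset {G : Type*} [Add G] (Θ : Set (G × G)) : Set G :=
  (fun p ↦ p.1 + p.2) '' Θ

lemma setLIntegral_le_mul_measure_partialSumset {G : Type*} [AddCommGroup G] [MeasurableSpace G]
    [MeasurableAdd G] [MeasurableSub₂ G] {μ : Measure G} [SFinite μ] [μ.IsAddRightInvariant]
    {Θ : Set (G × G)} (hΘ : MeasurableSet Θ) {w : G × G → ℝ≥0∞} (hw : Measurable w) {K : ℝ≥0∞}
    (hK : ∀ z, ∫⁻ x, Θ.indicator w (x, z - x) ∂μ ≤ K) :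
    ∫⁻ a in Θ, w a ∂μ.prod μ ≤ K * μ (partialSumset Θ) := by
  have hm : Measurable (Θ.indicator w) := hw.indicator hΘ
  calc ∫⁻ a in Θ, w a ∂μ.prod μ = ∫⁻ x, ∫⁻ y, Θ.indicator w (x, y) ∂μ ∂μ := by
        rw [← lintegral_indicator hΘ, lintegral_prod _ hm.aemeasurable]
    _ = ∫⁻ x, ∫⁻ z, Θ.indicator w (x, z - x) ∂μ ∂μ :=
        lintegral_congr fun x ↦ (lintegral_sub_right_eq_self (fun y ↦ Θ.indicator w (x, y)) x).symm
    _ = ∫⁻ z, ∫⁻ x, Θ.indicator w (x, z - x) ∂μ ∂μ :=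
        lintegral_lintegral_swap (Measurable.aemeasurable (hm.comp
          (measurable_fst.prodMk (measurable_snd.sub measurable_fst))))
    _ ≤ ∫⁻ z, (toMeasurable μ (partialSumset Θ)).indicator (fun _ ↦ K) z ∂μ := by
        refine lintegral_mono fun z ↦ ?_
        by_cases hz : z ∈ toMeasurable μ (partialSumset Θ)
        · rw [indicator_of_mem hz]
          exact hK z
        · rw [indicator_of_notMem hz]
          refine (lintegral_eq_zero_of_ae_eq_zero (ae_of_all _ fun x ↦ ?_)).le
          refine indicator_of_notMem (fun hx ↦ hz (subset_toMeasurable _ _ ⟨_, hx, ?_⟩)) _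
          exact add_sub_cancel x z
    _ = K * μ (partialSumset Θ) := by
        rw [lintegral_indicator (measurableSet_toMeasurable _ _), setLIntegral_const,
          measure_toMeasurable]

namespace IsGaussianWeight

section Indicator

variable {G : Type*} [MeasurableSpace G] {μ : Measure G} {N : ℕ} {p q : ℝ}
  {A B : Set G} {L : G × G → ℝ}

lemma setLIntegral_exp_mul [Sub G] [SFinite μ] (hA : MeasurableSet A) (hB : MeasurableSet B)
    (hL : Measurable L) (h : IsGaussianWeight μ N p q (A.indicator 1) (B.indicator 1) L) {s : ℝ}
    (hs : s ^ 2 * (p * q) < 1) :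
    ∫⁻ x in A ×ˢ B, ENNReal.ofReal (Real.exp (s * L x)) ∂μ.prod μ =
      ENNReal.ofReal (√(1 - s ^ 2 * (p * q)))⁻¹ ^ N * (μ A * μ B) := by
  have hmoment := h.exp_moment_eq s hs
  rw [lintegral_indicator_one hA, lintegral_indicator_one hB] at hmoment
  rw [← hmoment, ← lintegral_indicator (hA.prod hB), lintegral_prod _
    (Measurable.aemeasurable (Measurable.indicator (by fun_prop) (hA.prod hB)))]
  refine lintegral_congr fun x ↦ lintegral_congr fun y ↦ ?_
  by_cases hx : x ∈ A <;> by_cases hy : y ∈ B <;> simp [hx, hy]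

lemma measure_mul_le_setLIntegral_exp [Sub G] [SFinite μ] (hA : MeasurableSet A)
    (hB : MeasurableSet B) (hAt : μ A ≠ ∞) (hBt : μ B ≠ ∞) (hp : 0 < p) (hq : 0 < q)
    (hL : Measurable L) (h : IsGaussianWeight μ N p q (A.indicator 1) (B.indicator 1) L) {κ : ℝ}
    (hκ0 : 0 < κ) (hκ1 : κ ≤ 1 / 4) (hκ : (2 * κ) ^ 2 ≤ N * (p * q)) {Θ : Set (G × G)}
    (hΘ : MeasurableSet Θ) (hΘAB : Θ ⊆ A ×ˢ B)
    (hΘc : μ.prod μ ((A ×ˢ B) \ Θ) ≤ ENNReal.ofReal (κ ^ 4 / 8) * (μ A * μ B)) :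
    μ A * μ B ≤ ∫⁻ x in Θ, ENNReal.ofReal (Real.exp (L x)) ∂μ.prod μ := by
  have hNpq : 0 < N * (p * q) := lt_of_lt_of_le (by positivity) hκ
  have hN : 0 < N := Nat.cast_pos.1 (pos_of_mul_pos_left hNpq (by positivity))
  set s := κ / √(N * (p * q)) with hs
  have hs0 : 0 < s := div_pos hκ0 (Real.sqrt_pos.2 hNpq)
  have hs1 : 2 * s ≤ 1 := by
    rw [hs, ← mul_div_assoc, div_le_one (Real.sqrt_pos.2 hNpq)]
    exact Real.le_sqrt_of_sq_le hκ
  have hspq : s ^ 2 * (p * q) = κ ^ 2 / N := by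
    rw [hs, div_pow, Real.sq_sqrt hNpq.le]
    field_simp
  have hspq2 : (2 * s) ^ 2 * (p * q) = 4 * κ ^ 2 / N := by linear_combination 4 * hspq
  have hκsq : κ ^ 2 ≤ 1 / 16 := by nlinarith
  have hdiv : 4 * κ ^ 2 / N < 1 :=
    (div_le_self (by positivity) (by exact_mod_cast hN)).trans_lt (by linarith)
  set ν := (μ.prod μ).restrict (A ×ˢ B)
  have hνuniv : ν univ = μ A * μ B := by rw [Measure.restrict_apply_univ, Measure.prod_prod]
  have : IsFiniteMeasure ν := ⟨by rw [hνuniv]; finiteness⟩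
  rw [← inter_eq_left.2 hΘAB, ← Measure.restrict_restrict hΘ, ← hνuniv]
  refine measure_univ_le_setLIntegral_exp ν hΘ hs0 (by linarith) hκ0 ?_ ?_ ?_
  · rw [setLIntegral_exp_mul hA hB hL h (by rw [hspq]; linarith), hspq,
      ← ENNReal.ofReal_pow (by positivity), hνuniv]
    gcongr
    exact one_add_half_le_inv_sqrt_pow hN (by positivity) (by linarith)
  · rw [setLIntegral_exp_mul hA hB hL h (by rwa [hspq2]), hspq2,
      ← ENNReal.ofReal_pow (by positivity), hνuniv, ← ENNReal.ofReal_ofNat 2]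
    gcongr
    exact inv_sqrt_pow_le_two hN (by positivity) (by linarith)
  · rwa [hνuniv, Measure.restrict_apply hΘ.compl, inter_comm, ← sdiff_eq]

lemma setLIntegral_exp_le_mul_partialSumset [AddCommGroup G] [MeasurableAdd G] [MeasurableSub₂ G]
    [SFinite μ] [μ.IsAddRightInvariant] (hA : MeasurableSet A) (hB : MeasurableSet B)
    (hL : Measurable L) (h : IsGaussianWeight μ N p q (A.indicator 1) (B.indicator 1) L)
    {Θ : Set (G × G)} (hΘ : MeasurableSet Θ) (hΘAB : Θ ⊆ A ×ˢ B) :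
    ∫⁻ x in Θ, ENNReal.ofReal (Real.exp (L x)) ∂μ.prod μ ≤
      ENNReal.ofReal (√p ^ p * √q ^ q) ^ N * (μ A ^ q * μ B ^ p) * μ (partialSumset Θ) := by
  refine setLIntegral_le_mul_measure_partialSumset hΘ (by fun_prop) fun z ↦ ?_
  have hconv := h.convolution_le z
  rw [lintegral_indicator_one hA, lintegral_indicator_one hB] at hconv
  refine (lintegral_mono fun x ↦ ?_).trans hconv
  by_cases hx : (x, z - x) ∈ Θ
  · obtain ⟨hxA, hxB⟩ := hΘAB hx
    simp only [hx, hxA, hxB, indicator_of_mem, Pi.one_apply, ENNReal.one_rpow, one_mul, le_refl]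
  · simp only [hx, not_false_eq_true, indicator_of_notMem, zero_le]

end Indicator

end IsGaussianWeight

lemma sqrt_rpow_mul_sqrt_rpow_mul_rpow {a b h : ℝ} (ha : 0 < a) (hb : 0 < b) (hh : 0 < h)
    (hab : (a / h) ^ 2 + (b / h) ^ 2 = 1) :
    √((a / h) ^ 2) ^ (a / h) ^ 2 * √((b / h) ^ 2) ^ (b / h) ^ 2 *
      (a ^ (b / h) ^ 2 * b ^ (a / h) ^ 2) = a * b / h := by
  rw [Real.sqrt_sq (by positivity), Real.sqrt_sq (by positivity)]
  set p := (a / h) ^ 2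
  set q := (b / h) ^ 2
  have hsplit : ∀ {x : ℝ}, 0 < x → x ^ p * x ^ q = x := fun hx ↦ by
    rw [← Real.rpow_add hx, hab, Real.rpow_one]
  rw [Real.div_rpow ha.le hh.le, Real.div_rpow hb.le hh.le]
  calc _ = (a ^ p * a ^ q) * (b ^ p * b ^ q) / (h ^ p * h ^ q) := by ring
    _ = _ := by rw [hsplit ha, hsplit hb, hsplit hh]

lemma ofReal_sqrt_rpow_pow_mul_rpow {a b h : ℝ} (ha : 0 < a) (hb : 0 < b) (hh : 0 < h)
    (hab : (a / h) ^ 2 + (b / h) ^ 2 = 1) (n : ℕ) :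
    ENNReal.ofReal (√((a / h) ^ 2) ^ (a / h) ^ 2 * √((b / h) ^ 2) ^ (b / h) ^ 2) ^ n *
      (ENNReal.ofReal (a ^ n) ^ (b / h) ^ 2 * ENNReal.ofReal (b ^ n) ^ (a / h) ^ 2) =
      ENNReal.ofReal ((a * b / h) ^ n) := by
  rw [ENNReal.ofReal_rpow_of_pos (by positivity), ENNReal.ofReal_rpow_of_pos (by positivity),
    ← ENNReal.ofReal_pow (by positivity), ← ENNReal.ofReal_mul (by positivity),
    ← ENNReal.ofReal_mul (by positivity), ← Real.rpow_pow_comm ha.le, ← Real.rpow_pow_comm hb.le,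
    ← mul_pow, ← mul_pow, sqrt_rpow_mul_sqrt_rpow_mul_rpow ha hb hh hab]

/-! ### Almost periods -/

section Translates

variable {G : Type*} [AddCommGroup G] [MeasurableSpace G] [MeasurableAdd G] {μ : Measure G}
  [μ.IsAddRightInvariant] {A : Set G} {Θ : Set (G × G)}

lemma measure_sdiff_preimage_add_nsmul_le (A : Set G) (v : G) (k : ℕ) :
    μ (A \ (fun x ↦ x + k • v) ⁻¹' A) ≤ k * μ (A \ (fun x ↦ x + v) ⁻¹' A) := by
  induction k with
  | zero => simp
  | succ k ih =>
    have hsub : A \ (fun x ↦ x + (k + 1) • v) ⁻¹' A ⊆ A \ (fun x ↦ x + k • v) ⁻¹' A ∪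
        (fun x ↦ x + k • v) ⁻¹' (A \ (fun x ↦ x + v) ⁻¹' A) := by
      rintro x ⟨hx, hxv⟩
      by_cases hkx : x + k • v ∈ A
      · refine Or.inr ⟨hkx, ?_⟩
        rwa [mem_preimage, add_assoc, ← succ_nsmul]
      · exact Or.inl ⟨hx, hkx⟩
    refine (measure_mono hsub).trans ((measure_union_le _ _).trans ?_)
    rw [measure_preimage_add_right, Nat.cast_succ, add_mul, one_mul]
    gcongr

lemma measure_fibre_add_measure_fibre_sdiff_le (hΘ : MeasurableSet Θ) (hΘA : MapsTo Prod.fst Θ A)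
    (y y' : G) :
    μ ((fun x ↦ (x, y)) ⁻¹' Θ) +
        μ ((fun x ↦ (x, y')) ⁻¹' Θ \ (fun x ↦ x + (y' - y)) ⁻¹' A) ≤ μ (partialSumset Θ) := by
  rw [← measure_preimage_add_right μ (-y) ((fun x ↦ (x, y)) ⁻¹' Θ),
    ← measure_preimage_add_right μ (-y') (_ \ _),
    ← measure_union' _ (measurable_add_const (-y) (measurable_prodMk_right hΘ))]
  · refine measure_mono (union_subset (fun z hz ↦ ?_) fun z hz ↦ ?_)
    · exact ⟨(z + -y, y), hz, neg_add_cancel_right z y⟩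
    · exact ⟨(z + -y', y'), hz.1, neg_add_cancel_right z y'⟩
  · rw [disjoint_left]
    rintro z hz ⟨-, hz'⟩
    refine hz' ?_
    rw [mem_preimage, (by abel : z + -y' + (y' - y) = z + -y)]
    exact hΘA hz

lemma measure_add_measure_sdiff_preimage_add_le (hΘ : MeasurableSet Θ)
    (hΘA : MapsTo Prod.fst Θ A) (y y' : G) :
    μ A + μ (A \ (fun x ↦ x + (y' - y)) ⁻¹' A) ≤ μ (partialSumset Θ) +
      (μ (A \ (fun x ↦ (x, y)) ⁻¹' Θ) + μ (A \ (fun x ↦ (x, y')) ⁻¹' Θ)) := by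
  set F := (fun x ↦ (x, y)) ⁻¹' Θ
  set F' := (fun x ↦ (x, y')) ⁻¹' Θ
  set P := (fun x ↦ x + (y' - y)) ⁻¹' A
  have hF : μ A ≤ μ F + μ (A \ F) :=
    (measure_mono (by simp)).trans (measure_union_le F (A \ F))
  have hF' : μ (A \ P) ≤ μ (F' \ P) + μ (A \ F') := by
    refine (measure_mono fun x hx ↦ ?_).trans (measure_union_le _ _)
    by_cases hxF : x ∈ F'
    exacts [Or.inl ⟨hxF, hx.2⟩, Or.inr ⟨hx.1, hxF⟩]
  calc _ ≤ (μ F + μ (A \ F)) + (μ (F' \ P) + μ (A \ F')) := add_le_add hF hF'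
    _ = (μ F + μ (F' \ P)) + (μ (A \ F) + μ (A \ F')) := add_add_add_comm _ _ _ _
    _ ≤ _ := by
      gcongr
      exact measure_fibre_add_measure_fibre_sdiff_le hΘ hΘA y y'

end Translates

lemma measure_univ_le_two_mul_of_lintegral_le {β : Type*} [MeasurableSpace β] {ν : Measure β}
    [IsFiniteMeasure ν] {φ : β → ℝ≥0∞} (hφ : Measurable φ) {M : ℝ≥0∞} (hM0 : M ≠ 0) (hMt : M ≠ ∞)
    (h : ∫⁻ y, φ y ∂ν ≤ M * ν univ) : ν univ ≤ 2 * ν {y | φ y ≤ 2 * M} := by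
  have hlarge : 2 * ν {y | φ y ≤ 2 * M}ᶜ ≤ ν univ := by
    rw [← ENNReal.mul_le_mul_iff_right hM0 hMt]
    calc M * (2 * ν {y | φ y ≤ 2 * M}ᶜ) = 2 * M * ν {y | φ y ≤ 2 * M}ᶜ := by ring
      _ ≤ 2 * M * ν {y | 2 * M ≤ φ y} := by
        gcongr
        exact fun y hy ↦ (lt_of_not_ge (notMem_ofPred_iff.1 hy)).le
      _ ≤ M * ν univ := (mul_meas_ge_le_lintegral hφ _).trans h
  have hsplit : ν univ + ν univ ≤ 2 * ν {y | φ y ≤ 2 * M} + ν univ := by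
    calc ν univ + ν univ = 2 * ν {y | φ y ≤ 2 * M} + 2 * ν {y | φ y ≤ 2 * M}ᶜ := by
          rw [← mul_add, measure_add_measure_compl (measurableSet_le hφ measurable_const), two_mul]
      _ ≤ _ := by gcongr
  exact (ENNReal.add_le_add_iff_right (measure_ne_top ν _)).1 hsplit

lemma exists_measurableSet_measure_fibre_le {α β : Type*} [MeasurableSpace α] [MeasurableSpace β]
    {μ : Measure α} {ν : Measure β} [SFinite μ] [SFinite ν] {A : Set α} {B : Set β}
    (hA : MeasurableSet A) (hB : MeasurableSet B) (hBt : ν B ≠ ∞) {Θ : Set (α × β)}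
    (hΘ : MeasurableSet Θ) {M : ℝ≥0∞} (hM0 : M ≠ 0) (hMt : M ≠ ∞)
    (hΘc : μ.prod ν ((A ×ˢ B) \ Θ) ≤ M * ν B) :
    ∃ G ⊆ B, MeasurableSet G ∧ ν B ≤ 2 * ν G ∧
      ∀ y ∈ G, μ (A \ (fun x ↦ (x, y)) ⁻¹' Θ) ≤ 2 * M := by
  have : IsFiniteMeasure (ν.restrict B) := ⟨by rw [Measure.restrict_apply_univ]; exact hBt.lt_top⟩
  have hfibre : ∀ y, (μ.restrict A) ((fun x ↦ (x, y)) ⁻¹' Θᶜ) = μ (A \ (fun x ↦ (x, y)) ⁻¹' Θ) :=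
    fun y ↦ by rw [Measure.restrict_apply' hA, preimage_compl, inter_comm, sdiff_eq]
  have hmeas : Measurable fun y ↦ μ (A \ (fun x ↦ (x, y)) ⁻¹' Θ) := by
    simp only [← hfibre]
    exact measurable_measure_prodMk_right hΘ.compl
  have hint : ∫⁻ y in B, μ (A \ (fun x ↦ (x, y)) ⁻¹' Θ) ∂ν = μ.prod ν ((A ×ˢ B) \ Θ) := by
    simp only [← hfibre]
    rw [← Measure.prod_apply_symm hΘ.compl, Measure.prod_restrict,
      Measure.restrict_apply hΘ.compl, inter_comm, sdiff_eq]
  refine ⟨B ∩ {y | μ (A \ (fun x ↦ (x, y)) ⁻¹' Θ) ≤ 2 * M}, inter_subset_left,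
    hB.inter (measurableSet_le hmeas measurable_const), ?_, fun y hy ↦ hy.2⟩
  have hmarkov := measure_univ_le_two_mul_of_lintegral_le hmeas hM0 hMt
    (by rwa [hint, Measure.restrict_apply_univ])
  rwa [Measure.restrict_apply_univ, Measure.restrict_apply' hB, inter_comm] at hmarkov

lemma exists_measurableSet_measure_sdiff_preimage_add_le {G : Type*} [AddCommGroup G]
    [MeasurableSpace G] [MeasurableAdd G] {μ : Measure G} [SFinite μ] [μ.IsAddRightInvariant]
    {A B : Set G} (hA : MeasurableSet A) (hB : MeasurableSet B) (hAt : μ A ≠ ∞) (hBt : μ B ≠ ∞)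
    {Θ : Set (G × G)} (hΘ : MeasurableSet Θ) (hΘA : MapsTo Prod.fst Θ A) {M η : ℝ≥0∞} (hM0 : M ≠ 0)
    (hMt : M ≠ ∞) (hΘc : μ.prod μ ((A ×ˢ B) \ Θ) ≤ M * μ B)
    (hsum : μ (partialSumset Θ) ≤ μ A + η) :
    ∃ C ⊆ B, MeasurableSet C ∧ μ B ≤ 2 * μ C ∧
      ∀ y ∈ C, ∀ y' ∈ C, μ (A \ (fun x ↦ x + (y' - y)) ⁻¹' A) ≤ η + 4 * M := by
  obtain ⟨C, hCB, hC, hBC, hfibre⟩ :=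
    exists_measurableSet_measure_fibre_le hA hB hBt hΘ hM0 hMt hΘc
  refine ⟨C, hCB, hC, hBC, fun y hy y' hy' ↦ (ENNReal.add_le_add_iff_left hAt).1 ?_⟩
  calc _ ≤ _ := measure_add_measure_sdiff_preimage_add_le hΘ hΘA y y'
    _ ≤ μ A + η + (2 * M + 2 * M) := add_le_add hsum (add_le_add (hfibre y hy) (hfibre y' hy'))
    _ = μ A + (η + 4 * M) := by ring

lemma sqrt_add_sq_pow_le {a b : ℝ} {n : ℕ} (ha : 0 < a) (hb : 0 < b) (hr : b / a * √n ≤ 1) :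
    √(a ^ 2 + b ^ 2) ^ n ≤ a ^ n * (1 + (b / a * √n) ^ 2) := by
  have hsqrt : √(a ^ 2 + b ^ 2) ≤ a * Real.exp ((b / a) ^ 2 / 2) := by
    refine Real.sqrt_le_iff.2 ⟨by positivity, ?_⟩
    calc a ^ 2 + b ^ 2 = a ^ 2 * ((b / a) ^ 2 + 1) := by field_simp; ring
      _ ≤ a ^ 2 * Real.exp ((b / a) ^ 2) := by gcongr; exact Real.add_one_le_exp _
      _ = (a * Real.exp ((b / a) ^ 2 / 2)) ^ 2 := by
        rw [mul_pow, ← Real.exp_nat_mul, Nat.cast_two, mul_div_cancel₀ _ two_ne_zero]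
  have hr2 : n * ((b / a) ^ 2 / 2) = (b / a * √n) ^ 2 / 2 := by
    rw [mul_pow, Real.sq_sqrt (Nat.cast_nonneg n)]
    ring
  have hexp : Real.exp ((b / a * √n) ^ 2 / 2) ≤ 1 + (b / a * √n) ^ 2 := by
    have hr1 : (b / a * √n) ^ 2 ≤ 1 := pow_le_one₀ (by positivity) hr
    have habs : |(b / a * √n) ^ 2 / 2| = (b / a * √n) ^ 2 / 2 := abs_of_nonneg (by positivity)
    have h := Real.abs_exp_sub_one_le (x := (b / a * √n) ^ 2 / 2) (by rw [habs]; linarith)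
    linarith [le_abs_self (Real.exp ((b / a * √n) ^ 2 / 2) - 1)]
  calc √(a ^ 2 + b ^ 2) ^ n ≤ (a * Real.exp ((b / a) ^ 2 / 2)) ^ n := by gcongr
    _ = a ^ n * Real.exp ((b / a * √n) ^ 2 / 2) := by rw [mul_pow, ← Real.exp_nat_mul, hr2]
    _ ≤ _ := by gcongr

lemma exists_pos_eq_ofReal_pow {x : ℝ≥0∞} (hx0 : x ≠ 0) (hxt : x ≠ ∞) {n : ℕ} (hn : n ≠ 0) :
    ∃ a : ℝ, 0 < a ∧ x = ENNReal.ofReal (a ^ n) :=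
  ⟨x.toReal ^ (n⁻¹ : ℝ), Real.rpow_pos_of_pos (ENNReal.toReal_pos hx0 hxt) _, by
    rw [Real.rpow_inv_natCast_pow ENNReal.toReal_nonneg hn, ENNReal.ofReal_toReal hxt]⟩

lemma ofReal_pow_rpow_two_div {a : ℝ} (ha : 0 < a) {n : ℕ} (hn : n ≠ 0) :
    ENNReal.ofReal (a ^ n) ^ ((2 : ℝ) / n) = ENNReal.ofReal (a ^ 2) := by
  rw [ENNReal.ofReal_rpow_of_pos (by positivity), ← Real.rpow_natCast_mul ha.le,
    mul_div_cancel₀ _ (Nat.cast_ne_zero.2 hn), Real.rpow_two]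

lemma div_rpow_one_div_ofReal_pow {a b : ℝ} (ha : 0 < a) (hb : 0 < b) {n : ℕ} (hn : n ≠ 0) :
    (ENNReal.ofReal (b ^ n) / ENNReal.ofReal (a ^ n)) ^ ((1 : ℝ) / n) = ENNReal.ofReal (b / a) := by
  rw [← ENNReal.ofReal_div_of_pos (by positivity), ← div_pow,
    ENNReal.ofReal_rpow_of_pos (by positivity), one_div,
    Real.pow_rpow_inv_natCast (by positivity) hn]

lemma div_two_le_of_ofReal_pow_le_two_mul {b g : ℝ} (hg : 0 < g) {n : ℕ} (hn : n ≠ 0)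
    (h : ENNReal.ofReal (b ^ n) ≤ 2 * ENNReal.ofReal (g ^ n)) : b / 2 ≤ g := by
  rw [← ENNReal.ofReal_ofNat 2, ← ENNReal.ofReal_mul zero_le_two,
    ENNReal.ofReal_le_ofReal_iff (by positivity)] at h
  refine le_of_pow_le_pow_left₀ hn hg.le ?_
  rw [div_pow, div_le_iff₀' (by positivity)]
  refine h.trans ?_
  gcongr
  exact le_self_pow₀ one_le_two hn

lemma exists_nat_one_le_mul_le_two {r : ℝ} (hr0 : 0 < r) (hr1 : r ≤ 1) :
    ∃ k : ℕ, 1 ≤ k * r ∧ k * r ≤ 2 := by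
  refine ⟨⌈1 / r⌉₊, (div_le_iff₀ hr0).1 (Nat.le_ceil _), ?_⟩
  calc ⌈1 / r⌉₊ * r ≤ (1 / r + 1) * r := by
        gcongr
        exact (Nat.ceil_lt_add_one (by positivity)).le
    _ = 1 + r := by rw [add_mul, div_mul_cancel₀ _ hr0.ne', one_mul]
    _ ≤ 2 := by linarith

lemma measure_prod_sdiff_le {α β : Type*} [MeasurableSpace α] [MeasurableSpace β] {μ : Measure α}
    {ν : Measure β} [SFinite ν] {A : Set α} {B : Set β} (hA : μ A ≠ ∞) (hB : ν B ≠ ∞)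
    {Θ : Set (α × β)} (hΘ : MeasurableSet Θ) (hΘAB : Θ ⊆ A ×ˢ B) {ε : ℝ}
    (h : ENNReal.ofReal (1 - ε) * (μ A * ν B) ≤ μ.prod ν Θ) :
    μ.prod ν ((A ×ˢ B) \ Θ) ≤ ENNReal.ofReal ε * (μ A * ν B) := by
  have hΘt : μ.prod ν Θ ≠ ∞ := ne_top_of_le_ne_top
    (by rw [Measure.prod_prod]; exact ENNReal.mul_ne_top hA hB) (measure_mono hΘAB)
  rw [measure_sdiff hΘAB hΘ.nullMeasurableSet hΘt, Measure.prod_prod, tsub_le_iff_right]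
  calc μ A * ν B = ENNReal.ofReal (ε + (1 - ε)) * (μ A * ν B) := by simp
    _ ≤ (ENNReal.ofReal ε + ENNReal.ofReal (1 - ε)) * (μ A * ν B) := by
      gcongr
      exact ENNReal.ofReal_add_le
    _ ≤ _ := by
      rw [add_mul]
      gcongr

lemma partialSumset_preimage_swap {G : Type*} [AddCommMagma G] (Θ : Set (G × G)) :
    partialSumset (Prod.swap ⁻¹' Θ) = partialSumset Θ := by
  ext z
  constructor
  · rintro ⟨x, hx, rfl⟩
    exact ⟨x.swap, hx, add_comm _ _⟩
  · rintro ⟨x, hx, rfl⟩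
    exact ⟨x.swap, hx, add_comm _ _⟩

lemma measure_prod_sdiff_preimage_add_le {G : Type*} [Add G] [MeasurableSpace G]
    [MeasurableAdd₂ G] {μ : Measure G} [SFinite μ] {A V : Set G} (hA : MeasurableSet A)
    (hV : MeasurableSet V) {δ : ℝ≥0∞} (h : ∀ v ∈ V, μ (A \ (fun x ↦ x + v) ⁻¹' A) ≤ δ) :
    μ.prod μ ((A ×ˢ V) \ (fun x ↦ x.1 + x.2) ⁻¹' A) ≤ δ * μ V := by
  rw [Measure.prod_apply_symm ((hA.prod hV).diff (measurable_add hA)), ← setLIntegral_const,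
    ← lintegral_indicator hV]
  refine lintegral_mono fun v ↦ ?_
  by_cases hv : v ∈ V
  · rw [indicator_of_mem hv]
    refine (measure_mono fun x hx ↦ ?_).trans (h v hv)
    exact ⟨hx.1.1, hx.2⟩
  · rw [indicator_of_notMem hv, nonpos_iff_eq_zero]
    exact measure_mono_null (fun x hx ↦ hv hx.1.2) measure_empty

lemma exists_measurableSet_almost_periods {G : Type*} [AddCommGroup G] [MeasurableSpace G]
    [MeasurableAdd G] {μ : Measure G} [SFinite μ] [μ.IsAddRightInvariant] {A B : Set G}
    (hA : MeasurableSet A) (hB : MeasurableSet B) (hA0 : μ A ≠ 0) (hAt : μ A ≠ ∞) {b : ℝ}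
    (hb : 0 < b) {n : ℕ} (hn : n ≠ 0) (hBb : μ B = ENNReal.ofReal (b ^ n)) {Θ : Set (G × G)}
    (hΘ : MeasurableSet Θ) (hΘAB : Θ ⊆ A ×ˢ B) {ε δ : ℝ} (hε : 0 < ε) (hδ : 0 ≤ δ)
    (hΘc : μ.prod μ ((A ×ˢ B) \ Θ) ≤ ENNReal.ofReal ε * (μ A * μ B))
    (hsum : μ (partialSumset Θ) ≤ ENNReal.ofReal (1 + δ) * μ A) :
    ∃ C g, MeasurableSet C ∧ μ C = ENNReal.ofReal (g ^ n) ∧ b / 2 ≤ g ∧ g ≤ b ∧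
      ∀ y ∈ C, ∀ y' ∈ C,
        μ (A \ (fun x ↦ x + (y' - y)) ⁻¹' A) ≤ ENNReal.ofReal (δ + 4 * ε) * μ A := by
  have hBt : μ B ≠ ∞ := hBb ▸ ENNReal.ofReal_ne_top
  obtain ⟨C, hCB, hC, hBC, hinv⟩ := exists_measurableSet_measure_sdiff_preimage_add_le hA hB hAt hBt
    hΘ (fun x hx ↦ (hΘAB hx).1) (M := ENNReal.ofReal ε * μ A)
    (η := ENNReal.ofReal δ * μ A)
    (mul_ne_zero (ENNReal.ofReal_pos.2 hε).ne' hA0) (by finiteness)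
    (by rwa [mul_assoc])
    (by rwa [ENNReal.ofReal_add zero_le_one hδ, ENNReal.ofReal_one, add_mul,
      one_mul] at hsum)
  have hC0 : μ C ≠ 0 := by
    intro h
    rw [h, mul_zero, hBb, nonpos_iff_eq_zero, ENNReal.ofReal_eq_zero] at hBC
    exact hBC.not_gt (by positivity)
  obtain ⟨g, hg, hCg⟩ :=
    exists_pos_eq_ofReal_pow hC0 (ne_top_of_le_ne_top hBt (measure_mono hCB)) hn
  have hgb : g ^ n ≤ b ^ n := by
    rw [← ENNReal.ofReal_le_ofReal_iff (by positivity), ← hCg, ← hBb]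
    exact measure_mono hCB
  refine ⟨C, g, hC, hCg,
    div_two_le_of_ofReal_pow_le_two_mul hg hn (by rwa [← hBb, ← hCg]),
    le_of_pow_le_pow_left₀ hn hb.le hgb, fun y hy y' hy' ↦ (hinv y hy y' hy').trans_eq ?_⟩
  rw [ENNReal.ofReal_add hδ (by positivity), ENNReal.ofReal_mul zero_le_four,
    ENNReal.ofReal_ofNat, add_mul, mul_assoc]

lemma add_sq_le_mul_of_le_of_le {a x s : ℝ} (ha : 0 ≤ a) (hx : 0 ≤ x) (hs : 1 ≤ s)
    (h1 : a ≤ x * s) (h2 : x * s ≤ 2 * a) : 2 * (1 / 8) * (a ^ 2 + x ^ 2) ≤ s * (a * x) := by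
  have hxs : x ≤ x * s := le_mul_of_one_le_right hx hs
  have ha2 : a ^ 2 ≤ a * (x * s) := (sq a).trans_le (mul_le_mul_of_nonneg_left h1 ha)
  have hx2 : x ^ 2 ≤ 2 * a * (x * s) :=
    (sq x).trans_le (mul_le_mul (hxs.trans h2) hxs hx (by positivity))
  linarith [mul_nonneg ha (mul_nonneg hx (zero_le_one.trans hs))]

lemma measure_prod_sdiff_preimage_swap {α β : Type*} [MeasurableSpace α] [MeasurableSpace β]
    {μ : Measure α} {ν : Measure β} [SFinite μ] [SFinite ν] {A : Set α} {B : Set β}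
    (hA : MeasurableSet A) (hB : MeasurableSet B) {Θ : Set (α × β)} (hΘ : MeasurableSet Θ) :
    ν.prod μ ((B ×ˢ A) \ Prod.swap ⁻¹' Θ) = μ.prod ν ((A ×ˢ B) \ Θ) := by
  rw [← preimage_swap_prod, ← preimage_sdiff]
  exact Measure.measurePreserving_swap.measure_preimage ((hA.prod hB).diff hΘ).nullMeasurableSet

/-! ### The inequality in finite-dimensional spaces -/

section EuclideanGeometry

open Module

variable {E : Type*} [NormedAddCommGroup E] [NormedSpace ℝ E] [FiniteDimensional ℝ E]
  [MeasurableSpace E] [BorelSpace E] {μ : Measure E} [μ.IsAddHaarMeasure] {A B : Set E}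

lemma le_measure_partialSumset (hA : MeasurableSet A) (hB : MeasurableSet B) {a b κ : ℝ}
    (ha : 0 < a) (hb : 0 < b) (hAa : μ A = ENNReal.ofReal (a ^ finrank ℝ E))
    (hBb : μ B = ENNReal.ofReal (b ^ finrank ℝ E)) (hκ0 : 0 < κ) (hκ1 : κ ≤ 1 / 4)
    (hκ : 2 * κ * (a ^ 2 + b ^ 2) ≤ √(finrank ℝ E) * (a * b)) {Θ : Set (E × E)}
    (hΘ : MeasurableSet Θ) (hΘAB : Θ ⊆ A ×ˢ B)
    (hΘc : μ.prod μ ((A ×ˢ B) \ Θ) ≤ ENNReal.ofReal (κ ^ 4 / 8) * (μ A * μ B)) :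
    ENNReal.ofReal (√(a ^ 2 + b ^ 2) ^ finrank ℝ E) ≤ μ (partialSumset Θ) := by
  set n := finrank ℝ E
  set h := √(a ^ 2 + b ^ 2)
  have hh : 0 < h := Real.sqrt_pos.2 (by positivity)
  have hh2 : h ^ 2 = a ^ 2 + b ^ 2 := Real.sq_sqrt (by positivity)
  have hpq : (a / h) ^ 2 + (b / h) ^ 2 = 1 := by
    rw [div_pow, div_pow, ← add_div, ← hh2, div_self (by positivity)]
  -- These exponents minimise the constant in the convolution bound; its value is `(a * b / h) ^ n`.
  have hconst := ofReal_sqrt_rpow_pow_mul_rpow ha hb hh hpq n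
  set p := (a / h) ^ 2
  set q := (b / h) ^ 2
  have hp : 0 < p := by positivity
  have hq : 0 < q := by positivity
  have hκpq : (2 * κ) ^ 2 ≤ n * (p * q) := by
    have hdiv : 2 * κ ≤ √n * (a * b) / h ^ 2 := by rwa [le_div_iff₀ (by positivity), hh2]
    calc (2 * κ) ^ 2 ≤ (√n * (a * b) / h ^ 2) ^ 2 := by gcongr
      _ = √n ^ 2 * (p * q) := by ring
      _ = _ := by rw [Real.sq_sqrt (Nat.cast_nonneg n)]
  obtain ⟨L, hL, hw⟩ := exists_isGaussianWeight μ hp hq hpq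
    (measurable_one.indicator hA) (measurable_one.indicator hB)
    (by rw [lintegral_indicator_one hA, hAa]; finiteness)
    (by rw [lintegral_indicator_one hB, hBb]; finiteness)
  have hmass := (hw.measure_mul_le_setLIntegral_exp hA hB (by rw [hAa]; finiteness)
    (by rw [hBb]; finiteness) hp hq hL hκ0 hκ1 hκpq hΘ hΘAB hΘc).trans
    (hw.setLIntegral_exp_le_mul_partialSumset hA hB hL hΘ hΘAB)
  have hpos : ENNReal.ofReal ((a * b / h) ^ n) ≠ 0 := (ENNReal.ofReal_pos.2 (by positivity)).ne'
  rw [← ENNReal.mul_le_mul_iff_right hpos ENNReal.ofReal_ne_top]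
  rw [hAa, hBb, hconst] at hmass
  refine le_trans (le_of_eq ?_) hmass
  rw [← ENNReal.ofReal_mul (by positivity), ← ENNReal.ofReal_mul (by positivity),
    ← mul_pow, ← mul_pow, div_mul_cancel₀ _ hh.ne']

lemma exists_lt_measure_sdiff_preimage_add {V : Set E} (hA : MeasurableSet A) (hV : MeasurableSet V)
    {a b κ : ℝ} (ha : 0 < a) (hb : 0 < b) (hAa : μ A = ENNReal.ofReal (a ^ finrank ℝ E))
    (hVb : μ V = ENNReal.ofReal (b ^ finrank ℝ E)) (hκ0 : 0 < κ) (hκ1 : κ ≤ 1 / 4)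
    (hκ : 2 * κ * (a ^ 2 + b ^ 2) ≤ √(finrank ℝ E) * (a * b)) :
    ∃ v ∈ V, ENNReal.ofReal (κ ^ 4 / 8) * μ A < μ (A \ (fun x ↦ x + v) ⁻¹' A) := by
  by_contra! hinv
  have hn : finrank ℝ E ≠ 0 := by
    intro h0
    rw [h0, Nat.cast_zero, Real.sqrt_zero, zero_mul] at hκ
    exact hκ.not_gt (by positivity)
  have hsub : partialSumset ((A ×ˢ V) ∩ (fun x ↦ x.1 + x.2) ⁻¹' A) ⊆ A := by
    rintro _ ⟨x, hx, rfl⟩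
    exact hx.2
  have hle := (le_measure_partialSumset hA hV ha hb hAa hVb hκ0 hκ1 hκ
    ((hA.prod hV).inter (measurable_add hA)) inter_subset_left (by
      rw [sdiff_self_inter, ← mul_assoc]
      exact measure_prod_sdiff_preimage_add_le hA hV hinv)).trans (measure_mono hsub)
  rw [hAa, ENNReal.ofReal_le_ofReal_iff (by positivity)] at hle
  have hsq := (Real.sqrt_le_iff.1 (le_of_pow_le_pow_left₀ hn ha.le hle)).2
  exact hsq.not_gt (lt_add_of_pos_right _ (by positivity))

lemma exists_measurableSet_dilation {C : Set E} (hC : MeasurableSet C) (hC0 : C.Nonempty)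
    {δ : ℝ≥0∞} (hδ : ∀ y ∈ C, ∀ y' ∈ C, μ (A \ (fun x ↦ x + (y' - y)) ⁻¹' A) ≤ δ) {k : ℕ}
    (hk : k ≠ 0) :
    ∃ V, MeasurableSet V ∧ μ V = k ^ finrank ℝ E * μ C ∧
      ∀ v ∈ V, μ (A \ (fun x ↦ x + v) ⁻¹' A) ≤ k * δ := by
  obtain ⟨y₀, hy₀⟩ := hC0
  have hk0 : (k : ℝ) ≠ 0 := Nat.cast_ne_zero.2 hk
  refine ⟨(fun v ↦ (k : ℝ)⁻¹ • v) ⁻¹' ((fun v ↦ v + y₀) ⁻¹' C),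
    measurable_const_smul _ (measurable_add_const _ hC), ?_, fun v hv ↦ ?_⟩
  · rw [Measure.addHaar_preimage_smul _ (inv_ne_zero hk0), measure_preimage_add_right, inv_pow,
      inv_inv, abs_of_nonneg (by positivity), ENNReal.ofReal_pow k.cast_nonneg,
      ENNReal.ofReal_natCast]
  · have hkv : v = k • ((k : ℝ)⁻¹ • v + y₀ - y₀) := by
      rw [add_sub_cancel_right, ← Nat.cast_smul_eq_nsmul ℝ, smul_inv_smul₀ hk0]
    rw [hkv]
    refine (measure_sdiff_preimage_add_nsmul_le A _ k).trans ?_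
    gcongr
    exact hδ y₀ hy₀ _ hv

lemma exists_lt_measure_sdiff_preimage_add_sub [Nontrivial E] {C : Set E} (hA : MeasurableSet A)
    (hC : MeasurableSet C) {a g : ℝ} (ha : 0 < a) (hg : 0 < g)
    (hAa : μ A = ENNReal.ofReal (a ^ finrank ℝ E)) (hCg : μ C = ENNReal.ofReal (g ^ finrank ℝ E))
    (hs : g / a * √(finrank ℝ E) ≤ 1) :
    ∃ y ∈ C, ∃ y' ∈ C, ENNReal.ofReal (g / a * √(finrank ℝ E) * (1 / 2) ^ 16) * μ A <
      μ (A \ (fun x ↦ x + (y' - y)) ⁻¹' A) := by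
  by_contra! hinv
  have hn : 0 < finrank ℝ E := finrank_pos
  have hC0 : C.Nonempty := nonempty_of_measure_ne_zero (μ := μ) (by rw [hCg]; positivity)
  obtain ⟨k, hk1, hk2⟩ :=
    exists_nat_one_le_mul_le_two (r := g / a * √(finrank ℝ E)) (by positivity) hs
  have hk : k ≠ 0 := by
    rintro rfl
    norm_num at hk1
  obtain ⟨V, hV, hVC, hVinv⟩ := exists_measurableSet_dilation hC hC0 hinv hk
  have hVg : μ V = ENNReal.ofReal ((k * g) ^ finrank ℝ E) := by
    rw [hVC, hCg, mul_pow, ENNReal.ofReal_mul (by positivity), ENNReal.ofReal_pow k.cast_nonneg,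
      ENNReal.ofReal_natCast]
  have hδ : (k : ℝ≥0∞) * (ENNReal.ofReal (g / a * √(finrank ℝ E) * (1 / 2) ^ 16) * μ A) ≤
      ENNReal.ofReal ((1 / 8) ^ 4 / 8) * μ A := by
    rw [← mul_assoc, ← ENNReal.ofReal_natCast, ← ENNReal.ofReal_mul k.cast_nonneg, ← mul_assoc]
    gcongr
    calc _ ≤ (2 : ℝ) * (1 / 2) ^ 16 := by gcongr
      _ = _ := by norm_num
  have hx : k * (g / a * √(finrank ℝ E)) * a = k * g * √(finrank ℝ E) := by field_simp
  have hx1 : a ≤ k * g * √(finrank ℝ E) := hx ▸ le_mul_of_one_le_left ha.le hk1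
  have hx2 : k * g * √(finrank ℝ E) ≤ 2 * a := hx ▸ mul_le_mul_of_nonneg_right hk2 ha.le
  have hn1 : (1 : ℝ) ≤ √(finrank ℝ E) := Real.one_le_sqrt.2 (by exact_mod_cast hn)
  obtain ⟨v, hv, hlt⟩ := exists_lt_measure_sdiff_preimage_add (κ := 1 / 8) hA hV ha
    (by positivity) hAa hVg (by norm_num) (by norm_num)
    (add_sq_le_mul_of_le_of_le ha.le (by positivity) hn1 hx1 hx2)
  exact (hlt.trans_le (hVinv v hv)).not_ge hδ

lemma le_measure_partialSumset_of_small [Nontrivial E] (hA : MeasurableSet A)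
    (hB : MeasurableSet B) {a b : ℝ} (ha : 0 < a) (hb : 0 < b)
    (hAa : μ A = ENNReal.ofReal (a ^ finrank ℝ E)) (hBb : μ B = ENNReal.ofReal (b ^ finrank ℝ E))
    (hr : b / a * √(finrank ℝ E) ≤ (1 / 2) ^ 18) {Θ : Set (E × E)} (hΘ : MeasurableSet Θ)
    (hΘAB : Θ ⊆ A ×ˢ B) (hΘc : μ.prod μ ((A ×ˢ B) \ Θ) ≤
      ENNReal.ofReal ((1 / 2) ^ 20 * (b / a * √(finrank ℝ E))) * (μ A * μ B)) :
    ENNReal.ofReal (√(a ^ 2 + b ^ 2) ^ finrank ℝ E) ≤ μ (partialSumset Θ) := by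
  by_contra! hlt
  have hn : 0 < finrank ℝ E := finrank_pos
  have hr1 : b / a * √(finrank ℝ E) ≤ 1 := hr.trans (by norm_num)
  have hsum : μ (partialSumset Θ) ≤ ENNReal.ofReal (1 + (b / a * √(finrank ℝ E)) ^ 2) * μ A := by
    rw [hAa, ← ENNReal.ofReal_mul (by positivity), mul_comm]
    exact hlt.le.trans (ENNReal.ofReal_le_ofReal (sqrt_add_sq_pow_le ha hb hr1))
  obtain ⟨C, g, hC, hCg, hbg, hgb, hinv⟩ := exists_measurableSet_almost_periods hA hB
    (by rw [hAa]; positivity) (hAa ▸ ENNReal.ofReal_ne_top) hb finrank_pos.ne' hBb hΘ hΘAB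
    (by positivity) (by positivity) hΘc hsum
  have hs : b / a * √(finrank ℝ E) / 2 ≤ g / a * √(finrank ℝ E) := by
    calc _ = b / 2 / a * √(finrank ℝ E) := by ring
      _ ≤ _ := by gcongr
  have hs1 : g / a * √(finrank ℝ E) ≤ 1 := le_trans (by gcongr) hr1
  obtain ⟨y, hy, y', hy', hlt'⟩ := exists_lt_measure_sdiff_preimage_add_sub hA hC ha
    ((half_pos hb).trans_le hbg) hAa hCg hs1
  refine (hlt'.trans_le (hinv y hy y' hy')).not_ge ?_
  gcongr
  set r := b / a * √(finrank ℝ E)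
  have : 0 < r := by positivity
  calc r ^ 2 + 4 * ((1 / 2) ^ 20 * r) = r * (r + (1 / 2) ^ 18) := by ring
    _ ≤ r * ((1 / 2) ^ 18 + (1 / 2) ^ 18) := by gcongr
    _ = r / 2 * (1 / 2) ^ 16 := by ring
    _ ≤ _ := by gcongr

lemma le_measure_partialSumset_of_le [Nontrivial E] (hA : MeasurableSet A) (hB : MeasurableSet B)
    {a b : ℝ} (ha : 0 < a) (hb : 0 < b) (hba : b ≤ a) (hAa : μ A = ENNReal.ofReal (a ^ finrank ℝ E))
    (hBb : μ B = ENNReal.ofReal (b ^ finrank ℝ E)) {Θ : Set (E × E)} (hΘ : MeasurableSet Θ)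
    (hΘAB : Θ ⊆ A ×ˢ B) (hΘc : μ.prod μ ((A ×ˢ B) \ Θ) ≤
      ENNReal.ofReal ((1 / 2) ^ 83 * min (b / a * √(finrank ℝ E)) 1) * (μ A * μ B)) :
    ENNReal.ofReal (√(a ^ 2 + b ^ 2) ^ finrank ℝ E) ≤ μ (partialSumset Θ) := by
  rcases le_total (b / a * √(finrank ℝ E)) ((1 / 2) ^ 18) with hr | hr
  · refine le_measure_partialSumset_of_small hA hB ha hb hAa hBb hr hΘ hΘAB (hΘc.trans ?_)
    gcongr ENNReal.ofReal (?_ * ?_) * _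
    exacts [pow_le_pow_of_le_one (by norm_num) (by norm_num) (by norm_num), min_le_left _ _]
  · refine le_measure_partialSumset hA hB ha hb hAa hBb (κ := (1 / 2) ^ 20)
      (by positivity) (by norm_num) ?_ hΘ hΘAB (hΘc.trans ?_)
    · calc 2 * (1 / 2) ^ 20 * (a ^ 2 + b ^ 2) ≤ 2 * (1 / 2) ^ 20 * (a ^ 2 + a ^ 2) := by gcongr
        _ = (1 / 2) ^ 18 * a ^ 2 := by ring
        _ ≤ b / a * √(finrank ℝ E) * a ^ 2 := by gcongr
        _ = _ := by field_simp
    · gcongr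
      calc (1 / 2 : ℝ) ^ 83 * min (b / a * √(finrank ℝ E)) 1 ≤ (1 / 2) ^ 83 * 1 := by
            gcongr
            exact min_le_right _ _
        _ = _ := by norm_num

lemma le_measure_partialSumset_of_le_min [Nontrivial E] (hA : MeasurableSet A)
    (hB : MeasurableSet B) {a b : ℝ} (ha : 0 < a) (hb : 0 < b)
    (hAa : μ A = ENNReal.ofReal (a ^ finrank ℝ E)) (hBb : μ B = ENNReal.ofReal (b ^ finrank ℝ E))
    {Θ : Set (E × E)} (hΘ : MeasurableSet Θ) (hΘAB : Θ ⊆ A ×ˢ B) {ρ : ℝ} (hρ1 : ρ ≤ b / a)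
    (hρ2 : ρ ≤ a / b) (hΘc : μ.prod μ ((A ×ˢ B) \ Θ) ≤
      ENNReal.ofReal ((1 / 2) ^ 83 * min (ρ * √(finrank ℝ E)) 1) * (μ A * μ B)) :
    ENNReal.ofReal (√(a ^ 2 + b ^ 2) ^ finrank ℝ E) ≤ μ (partialSumset Θ) := by
  rcases le_total b a with hba | hab
  · refine le_measure_partialSumset_of_le hA hB ha hb hba hAa hBb hΘ hΘAB (hΘc.trans ?_)
    gcongr
  · rw [← partialSumset_preimage_swap, add_comm]
    refine le_measure_partialSumset_of_le hB hA hb ha hab hBb hAa (measurable_swap hΘ)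
      (fun x hx ↦ (hΘAB hx).symm) ?_
    rw [measure_prod_sdiff_preimage_swap hA hB hΘ, mul_comm (μ B)]
    refine hΘc.trans ?_
    gcongr

lemma rpow_add_rpow_le_measure_partialSumset [Nontrivial E] (hA : MeasurableSet A)
    (hB : MeasurableSet B) (hA0 : 0 < μ A) (hAt : μ A < ∞) (hB0 : 0 < μ B) (hBt : μ B < ∞)
    {ρ : ℝ} (hρ : 0 < ρ) (hρ1 : ENNReal.ofReal ρ ≤ (μ B / μ A) ^ (1 / finrank ℝ E : ℝ))
    (hρ2 : (μ B / μ A) ^ (1 / finrank ℝ E : ℝ) ≤ ENNReal.ofReal ρ⁻¹)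
    {Θ : Set (E × E)} (hΘ : MeasurableSet Θ) (hΘAB : Θ ⊆ A ×ˢ B)
    (hΘle : ENNReal.ofReal (1 - (1 / 2) ^ 83 * min (ρ * √(finrank ℝ E)) 1) * (μ A * μ B) ≤
      μ.prod μ Θ) :
    μ A ^ (2 / finrank ℝ E : ℝ) + μ B ^ (2 / finrank ℝ E : ℝ) ≤
      μ (partialSumset Θ) ^ (2 / finrank ℝ E : ℝ) := by
  have hn : finrank ℝ E ≠ 0 := finrank_pos.ne'
  have hΘc := measure_prod_sdiff_le hAt.ne hBt.ne hΘ hΘAB hΘle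
  obtain ⟨a, ha, hAa⟩ := exists_pos_eq_ofReal_pow hA0.ne' hAt.ne hn
  obtain ⟨b, hb, hBb⟩ := exists_pos_eq_ofReal_pow hB0.ne' hBt.ne hn
  rw [hAa, hBb, div_rpow_one_div_ofReal_pow ha hb hn,
    ENNReal.ofReal_le_ofReal_iff (by positivity)] at hρ1 hρ2
  rw [le_inv_comm₀ (by positivity) hρ, inv_div] at hρ2
  calc μ A ^ (2 / finrank ℝ E : ℝ) + μ B ^ (2 / finrank ℝ E : ℝ)
      = ENNReal.ofReal (√(a ^ 2 + b ^ 2) ^ finrank ℝ E) ^ (2 / finrank ℝ E : ℝ) := by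
        rw [hAa, hBb, ofReal_pow_rpow_two_div ha hn, ofReal_pow_rpow_two_div hb hn,
          ofReal_pow_rpow_two_div (by positivity) hn, Real.sq_sqrt (by positivity),
          ENNReal.ofReal_add (by positivity) (by positivity)]
    _ ≤ _ := by
        gcongr
        exact le_measure_partialSumset_of_le_min hA hB ha hb hAa hBb hΘ hΘAB hρ1 hρ2 hΘc

universe u

theorem restricted_minkowski_sum_inequality_general :
    ∃ c : ℝ, 0 < c ∧ ∀ (E : Type u) [NormedAddCommGroup E] [NormedSpace ℝ E]
      [FiniteDimensional ℝ E] [Nontrivial E] [MeasurableSpace E] [BorelSpace E]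
      (μ : Measure E) [μ.IsAddHaarMeasure] (ρ : ℝ), 0 < ρ → ∀ A B : Set E,
      0 < μ A → μ A < ∞ → 0 < μ B → μ B < ∞ →
      ENNReal.ofReal ρ ≤ (μ B / μ A) ^ (1 / finrank ℝ E : ℝ) →
      (μ B / μ A) ^ (1 / finrank ℝ E : ℝ) ≤ ENNReal.ofReal ρ⁻¹ →
      ∀ Θ : Set (E × E), NullMeasurableSet Θ (μ.prod μ) → Θ ⊆ A ×ˢ B →
      ENNReal.ofReal (1 - c * min (ρ * √(finrank ℝ E)) 1) * (μ A * μ B) ≤ μ.prod μ Θ →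
      μ A ^ (2 / finrank ℝ E : ℝ) + μ B ^ (2 / finrank ℝ E : ℝ) ≤
        μ (partialSumset Θ) ^ (2 / finrank ℝ E : ℝ) := by
  refine ⟨(1 / 2) ^ 83, by positivity, fun E _ _ _ _ _ _ μ _ ρ hρ A B hA0 hAt hB0 hBt hρ1 hρ2
    Θ hΘ hΘAB hΘle ↦ ?_⟩
  obtain ⟨Θ', hΘ'Θ, hΘ', hae⟩ := hΘ.exists_measurable_subset_ae_eq
  rw [← measure_congr hae] at hΘle
  have hsub : Θ' ⊆ toMeasurable μ A ×ˢ toMeasurable μ B := hΘ'Θ.trans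
    (hΘAB.trans (prod_mono (subset_toMeasurable μ A) (subset_toMeasurable μ B)))
  rw [← measure_toMeasurable A] at hA0 hAt hρ1 hρ2 hΘle ⊢
  rw [← measure_toMeasurable B] at hB0 hBt hρ1 hρ2 hΘle ⊢
  refine (rpow_add_rpow_le_measure_partialSumset (measurableSet_toMeasurable μ A)
    (measurableSet_toMeasurable μ B) hA0 hAt hB0 hBt hρ hρ1 hρ2 hΘ' hsub hΘle).trans ?_
  gcongr
  exact image_mono hΘ'Θ

end EuclideanGeometry

end

/-- Theorem 1.2: if `Θ ⊂ A × B` occupies a proportion at least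
`1 - c·min{ρ√n, 1}` of `A × B`, then
`λ(A +_Θ B)^{2/n} ≥ λ(A)^{2/n} + λ(B)^{2/n}`. -/
theorem restricted_minkowski_sum_inequality :
    ∃ c : ℝ, 0 < c ∧
      ∀ (ρ : ℝ), ρ ∈ Set.Ioo (0 : ℝ) 1 →
      ∀ (n : ℕ), 0 < n →
      ∀ (A B : Set (EuclideanSpace ℝ (Fin n))),
        MeasurableSet A → MeasurableSet B →
        0 < volume A → volume A < ⊤ → 0 < volume B → volume B < ⊤ →
        ENNReal.ofReal ρ ≤ (volume B / volume A) ^ ((1 : ℝ) / n) →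
        (volume B / volume A) ^ ((1 : ℝ) / n) ≤ ENNReal.ofReal ρ⁻¹ →
      ∀ (Θ : Set (EuclideanSpace ℝ (Fin n) × EuclideanSpace ℝ (Fin n))),
        MeasurableSet Θ → Θ ⊆ A ×ˢ B →
        ENNReal.ofReal (1 - c * min (ρ * Real.sqrt n) 1) * (volume A * volume B)
          ≤ volume Θ →
        volume A ^ ((2 : ℝ) / n) + volume B ^ ((2 : ℝ) / n)
          ≤ volume (restrictedSum Θ) ^ ((2 : ℝ) / n) := by
  obtain ⟨c, hc, hmain⟩ := restricted_minkowski_sum_inequality_general.{0}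
  refine ⟨c, hc, fun ρ hρ n hn A B _ _ hA0 hAt hB0 hBt hρ1 hρ2 Θ hΘ hΘAB hΘle ↦ ?_⟩
  have : NeZero n := ⟨hn.ne'⟩
  have h := hmain (EuclideanSpace ℝ (Fin n)) volume ρ hρ.1 A B hA0 hAt hB0 hBt
  rw [finrank_euclideanSpace_fin] at h
  exact h hρ1 hρ2 Θ hΘ.nullMeasurableSet hΘAB hΘle
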